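/- Let 𝚫 ∈ Ã be a gentle quiver without branch arrows, without branch triangles, and without free relations, and let Γ be its standard model. Then Γ is a 1-cycle gentle quiver, every relation of Γ is isolated in Γ, and 𝚫 is isomorphic (as a quiver with relations) to the quiver obtained from Γ by completing all of its relations. -/

import Mathlib

/-! Common formalization infrastructure for gentle quivers (Bobinski–Buan,
    "Derived equivalence classification of gentle cluster tilted algebras"). -/

/-- A (finite) quiver with (length-two, monomial) relations.  Vertices and
arrows are natural numbers; `V` and `A` are the finite sets of vertices and
arrows, `src`/`tgt` give the start and terminus of each arrow, and `rel` is the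
set of relations, a relation `(a, b)` standing for the length-two path
`a·b` (so `src a = tgt b`). -/
structure QuivRel where
  V : Finset ℕ
  A : Finset ℕ
  src : ℕ → ℕ
  tgt : ℕ → ℕ
  rel : Finset (ℕ × ℕ)

namespace GentleQuiv

/-- Two vertices are adjacent if some arrow joins them (in either direction). -/
def Adj (Q : QuivRel) (x y : ℕ) : Prop :=
  ∃ a ∈ Q.A, (Q.src a = x ∧ Q.tgt a = y) ∨ (Q.src a = y ∧ Q.tgt a = x)

/-- A quiver is connected if any two of its vertices are joined by a walk. -/
def Connected (Q : QuivRel) : Prop :=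
  ∀ x ∈ Q.V, ∀ y ∈ Q.V, Relation.ReflTransGen (Adj Q) x y

/-- `l = [α₁, …, αₙ]` is a (nonempty) path in the quiver: consecutive arrows
compose, i.e. `s αᵢ = t αᵢ₊₁`. -/
def IsPathList (Q : QuivRel) (l : List ℕ) : Prop :=
  l ≠ [] ∧ (∀ a ∈ l, a ∈ Q.A) ∧ l.Chain' (fun a b => Q.src a = Q.tgt b)

/-- The path `l` contains a subpath (two consecutive arrows) lying in `R`. -/
def HasRelSubpath (Q : QuivRel) (l : List ℕ) : Prop :=
  ∃ a b, (a, b) ∈ Q.rel ∧ [a, b] <:+: l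

/-- Gentle quiver: connected, relations are composable pairs of arrows, at most
two arrows in/out of every vertex, the usual gentleness conditions on
relations, and a global bound forcing finite dimensionality. -/
def IsGentle (Q : QuivRel) : Prop :=
  Q.V.Nonempty ∧
  (∀ a ∈ Q.A, Q.src a ∈ Q.V ∧ Q.tgt a ∈ Q.V) ∧
  Connected Q ∧
  (∀ ρ ∈ Q.rel, ρ.1 ∈ Q.A ∧ ρ.2 ∈ Q.A ∧ Q.src ρ.1 = Q.tgt ρ.2) ∧
  (∀ x, (Q.A.filter fun a => Q.src a = x).card ≤ 2) ∧
  (∀ x, (Q.A.filter fun a => Q.tgt a = x).card ≤ 2) ∧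
  (∀ a ∈ Q.A, (Q.A.filter fun b => Q.src b = Q.tgt a ∧ (b, a) ∉ Q.rel).card ≤ 1) ∧
  (∀ a ∈ Q.A, (Q.A.filter fun c => Q.tgt c = Q.src a ∧ (a, c) ∉ Q.rel).card ≤ 1) ∧
  (∀ a ∈ Q.A, (Q.A.filter fun b => (b, a) ∈ Q.rel).card ≤ 1) ∧
  (∀ a ∈ Q.A, (Q.A.filter fun c => (a, c) ∈ Q.rel).card ≤ 1) ∧
  (∃ n : ℕ, ∀ l : List ℕ, IsPathList Q l → l.length = n → HasRelSubpath Q l)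

/-- A choice of functions `σ, τ : Δ₁ → {±1}` as in Avella-Alaminos–Geiss. -/
structure SigmaTau (Q : QuivRel) where
  σ : ℕ → ℤ
  τ : ℕ → ℤ
  σ_pm : ∀ a ∈ Q.A, σ a = 1 ∨ σ a = -1
  τ_pm : ∀ a ∈ Q.A, τ a = 1 ∨ τ a = -1
  σ_src : ∀ a ∈ Q.A, ∀ b ∈ Q.A, a ≠ b → Q.src a = Q.src b → σ a = -σ b
  τ_tgt : ∀ a ∈ Q.A, ∀ b ∈ Q.A, a ≠ b → Q.tgt a = Q.tgt b → τ a = -τ b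
  rel_iff : ∀ a ∈ Q.A, ∀ b ∈ Q.A, Q.src a = Q.tgt b → ((a, b) ∈ Q.rel ↔ σ a = τ b)

/-- A thread: either a trivial path/antipath `1_{x,ε}` at a vertex `x` with a
sign `ε`, or a sequence of arrows of positive length. -/
inductive Thread where
  | triv (x : ℕ) (ε : ℤ) : Thread
  | arrows (l : List ℕ) : Thread
deriving DecidableEq

/-- Source of a thread. -/
def Thread.source (Q : QuivRel) : Thread → ℕ
  | .triv x _ => x
  | .arrows l => Q.src l.getLast!

/-- Target of a thread. -/
def Thread.target (Q : QuivRel) : Thread → ℕ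
  | .triv x _ => x
  | .arrows l => Q.tgt l.head!

/-- `σω` (for paths and antipaths alike; `σ 1_{x,ε} = ε = σ 1'_{x,ε}`). -/
def Thread.sigma {Q : QuivRel} (st : SigmaTau Q) : Thread → ℤ
  | .triv _ ε => ε
  | .arrows l => st.σ l.getLast!

/-- `τω` when `ω` is regarded as a path (`τ 1_{x,ε} = -ε`). -/
def Thread.tauPath {Q : QuivRel} (st : SigmaTau Q) : Thread → ℤ
  | .triv _ ε => -ε
  | .arrows l => st.τ l.head!

/-- `τω` when `ω` is regarded as an antipath (`τ 1'_{x,ε} = ε`). -/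
def Thread.tauAnti {Q : QuivRel} (st : SigmaTau Q) : Thread → ℤ
  | .triv _ ε => ε
  | .arrows l => st.τ l.head!

/-- Length of a thread. -/
def Thread.len : Thread → ℕ
  | .triv _ _ => 0
  | .arrows l => l.length

/-- A path in `𝚫` of positive length (no two consecutive arrows in `R`). -/
def IsPermList (Q : QuivRel) (l : List ℕ) : Prop :=
  IsPathList Q l ∧ l.Chain' (fun a b => (a, b) ∉ Q.rel)

/-- An antipath in `𝚫` of positive length (all consecutive pairs in `R`). -/
def IsAntiList (Q : QuivRel) (l : List ℕ) : Prop :=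
  l ≠ [] ∧ (∀ a ∈ l, a ∈ Q.A) ∧ l.Chain' (fun a b => (a, b) ∈ Q.rel)

/-- A thread is a path in `𝚫` (including trivial ones). -/
def IsPathThread (Q : QuivRel) : Thread → Prop
  | .triv x ε => x ∈ Q.V ∧ (ε = 1 ∨ ε = -1)
  | .arrows l => IsPermList Q l

/-- A thread is an antipath in `𝚫` (including trivial ones). -/
def IsAntiThread (Q : QuivRel) : Thread → Prop
  | .triv x ε => x ∈ Q.V ∧ (ε = 1 ∨ ε = -1)
  | .arrows l => IsAntiList Q l

/-- `w ∈ ℳ`: `w` is a maximal path of `𝚫`. -/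
def InM (Q : QuivRel) (st : SigmaTau Q) (w : Thread) : Prop :=
  IsPathThread Q w ∧
  (¬ ∃ a ∈ Q.A, Q.src a = w.target Q ∧ st.σ a = -(w.tauPath st)) ∧
  (¬ ∃ b ∈ Q.A, Q.tgt b = w.source Q ∧ st.τ b = -(w.sigma st))

/-- `w ∈ 𝒩`: `w` is a maximal antipath of `𝚫`. -/
def InN (Q : QuivRel) (st : SigmaTau Q) (w : Thread) : Prop :=
  IsAntiThread Q w ∧
  (¬ ∃ a ∈ Q.A, Q.src a = w.target Q ∧ st.σ a = w.tauAnti st) ∧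
  (¬ ∃ b ∈ Q.A, Q.tgt b = w.source Q ∧ st.τ b = w.sigma st)

/-- The graph of the bijection `Φ = φ ∘ ψ : 𝒩 → 𝒩`:  `PhiRel Q st w w'` holds
iff `w, w' ∈ 𝒩` and the maximal path `ψ w` (with `s(ψw) = sw`, `σ(ψw) = -σw`)
satisfies `t w' = t (ψ w)` and `τ w' = -τ(ψ w)`, i.e. `w' = φ (ψ w) = Φ w`. -/
def PhiRel (Q : QuivRel) (st : SigmaTau Q) (w w' : Thread) : Prop :=
  InN Q st w ∧ InN Q st w' ∧
  ∃ m : Thread, InM Q st m ∧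
    m.source Q = w.source Q ∧ m.sigma st = -(w.sigma st) ∧
    w'.target Q = m.target Q ∧ w'.tauAnti st = -(m.tauPath st)

/-- `O` is an orbit of the `ℤ`-action on `𝒩` induced by `Φ`. -/
def NOrbit (Q : QuivRel) (st : SigmaTau Q) (O : Set Thread) : Prop :=
  ∃ w, InN Q st w ∧ O = {w' | Relation.EqvGen (PhiRel Q st) w w'}

/-- `p(𝒪) = |𝒪|` for an orbit `𝒪 ∈ 𝒩/ℤ`. -/
noncomputable def pN (O : Set Thread) : ℕ := O.ncard

/-- `q(𝒪) = Σ_{ω ∈ 𝒪} ℓ(ω)` for an orbit `𝒪 ∈ 𝒩/ℤ`. -/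
noncomputable def qN (O : Set Thread) : ℕ := ∑ᶠ w ∈ O, Thread.len w

/-- `a ∈ 𝒞`: the arrow `a` occurs in no maximal antipath. -/
def InC (Q : QuivRel) (st : SigmaTau Q) (a : ℕ) : Prop :=
  a ∈ Q.A ∧ ¬ ∃ l : List ℕ, InN Q st (.arrows l) ∧ a ∈ l

/-- The graph of the bijection `Ψ : 𝒞 → 𝒞`. -/
def PsiRel (Q : QuivRel) (st : SigmaTau Q) (a b : ℕ) : Prop :=
  InC Q st a ∧ InC Q st b ∧ Q.tgt b = Q.src a ∧ st.τ b = st.σ a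

/-- `O` is an orbit of the `ℤ`-action on `𝒞` induced by `Ψ`. -/
def COrbit (Q : QuivRel) (st : SigmaTau Q) (O : Set ℕ) : Prop :=
  ∃ a, InC Q st a ∧ O = {b | Relation.EqvGen (PsiRel Q st) a b}

/-- The Avella-Alaminos–Geiss invariant `f_𝚫 : ℕ² → ℕ`:  `f_𝚫 (p,q)` counts the
orbits `𝒪 ∈ 𝒩/ℤ ⊔ 𝒞/ℤ` with `p(𝒪) = p` and `q(𝒪) = q`. -/
noncomputable def fInv (Q : QuivRel) (st : SigmaTau Q) : ℕ × ℕ → ℕ := fun pq =>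
  {O : Set Thread | NOrbit Q st O ∧ pN O = pq.1 ∧ qN O = pq.2}.ncard +
  {O : Set ℕ | COrbit Q st O ∧ pq.1 = 0 ∧ O.ncard = pq.2}.ncard

/-- `[p, q] : ℕ² → ℕ`, the characteristic function of `{(p, q)}`. -/
def charFn (p q : ℕ) : ℕ × ℕ → ℕ := fun pq => if pq = (p, q) then 1 else 0

/-- Tree type: `|Δ₀| = |Δ₁| + 1`. -/
def TreeType (Q : QuivRel) : Prop := Q.V.card = Q.A.card + 1

/-- Removing a set of arrows (keeping all vertices); relations containing a
removed arrow are discarded. -/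
def deleteArrows (Q : QuivRel) (S : Finset ℕ) : QuivRel where
  V := Q.V
  A := Q.A \ S
  src := Q.src
  tgt := Q.tgt
  rel := Q.rel.filter fun ρ => ρ.1 ∉ S ∧ ρ.2 ∉ S

/-- Branch arrow: removing it disconnects the quiver. -/
def BranchArrow (Q : QuivRel) (a : ℕ) : Prop :=
  a ∈ Q.A ∧ ¬ Connected (deleteArrows Q {a})

/-- Cycle arrow: removing it leaves the quiver connected. -/
def CycleArrow (Q : QuivRel) (a : ℕ) : Prop :=
  a ∈ Q.A ∧ Connected (deleteArrows Q {a})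

/-- Branch relation: a relation one of whose arrows is a branch arrow. -/
def BranchRel (Q : QuivRel) (ρ : ℕ × ℕ) : Prop :=
  ρ ∈ Q.rel ∧ (BranchArrow Q ρ.1 ∨ BranchArrow Q ρ.2)

/-- A relation `ρ = (α, β)` is isolated if the antipath `(α, β)` is a maximal
antipath, i.e. `ρ ∈ 𝒩`. -/
def Isolated (Q : QuivRel) (st : SigmaTau Q) (ρ : ℕ × ℕ) : Prop :=
  ρ ∈ Q.rel ∧ InN Q st (.arrows [ρ.1, ρ.2])

/-- `Q'` is obtained from `Q` by completing the relations from `R₀`, the new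
arrow attached to `ρ ∈ R₀` being `γ ρ`. -/
structure IsCompletion (Q : QuivRel) (R0 : Finset (ℕ × ℕ)) (γ : ℕ × ℕ → ℕ)
    (Q' : QuivRel) : Prop where
  subset : R0 ⊆ Q.rel
  fresh : ∀ ρ ∈ R0, γ ρ ∉ Q.A
  inj : ∀ ρ ∈ R0, ∀ ρ' ∈ R0, γ ρ = γ ρ' → ρ = ρ'
  V_eq : Q'.V = Q.V
  A_eq : Q'.A = Q.A ∪ R0.image γ
  src_old : ∀ a ∈ Q.A, Q'.src a = Q.src a
  tgt_old : ∀ a ∈ Q.A, Q'.tgt a = Q.tgt a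
  src_new : ∀ ρ ∈ R0, Q'.src (γ ρ) = Q.tgt ρ.1
  tgt_new : ∀ ρ ∈ R0, Q'.tgt (γ ρ) = Q.src ρ.2
  rel_eq : Q'.rel = Q.rel ∪ R0.image (fun ρ => (γ ρ, ρ.1)) ∪
      R0.image (fun ρ => (ρ.2, γ ρ))

/-- A 3-cycle: three pairwise distinct arrows forming an oriented cycle. -/
def Is3Cycle (Q : QuivRel) (a0 a1 a2 : ℕ) : Prop :=
  a0 ∈ Q.A ∧ a1 ∈ Q.A ∧ a2 ∈ Q.A ∧ a0 ≠ a1 ∧ a1 ≠ a2 ∧ a0 ≠ a2 ∧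
  Q.src a0 = Q.tgt a1 ∧ Q.src a1 = Q.tgt a2 ∧ Q.src a2 = Q.tgt a0

/-- A triangle: a 3-cycle all of whose three compositions are relations. -/
def IsTriangleTriple (Q : QuivRel) (a0 a1 a2 : ℕ) : Prop :=
  Is3Cycle Q a0 a1 a2 ∧ (a0, a1) ∈ Q.rel ∧ (a1, a2) ∈ Q.rel ∧ (a2, a0) ∈ Q.rel

/-- The (unordered) set of arrows of a triangle. -/
def TriangleSet (Q : QuivRel) (O : Finset ℕ) : Prop :=
  ∃ a0 a1 a2, O = {a0, a1, a2} ∧ IsTriangleTriple Q a0 a1 a2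

/-- Branch triangle: removing any two of its arrows disconnects the quiver. -/
def BranchTriangle (Q : QuivRel) (O : Finset ℕ) : Prop :=
  TriangleSet Q O ∧ ∀ S ⊆ O, S.card = 2 → ¬ Connected (deleteArrows Q S)

/-- Free relation: a relation neither of whose arrows lies in `𝒞`. -/
def FreeRel (Q : QuivRel) (st : SigmaTau Q) (ρ : ℕ × ℕ) : Prop :=
  ρ ∈ Q.rel ∧ ¬ InC Q st ρ.1 ∧ ¬ InC Q st ρ.2

/-- The class `𝒜`: gentle quivers with `f_𝚫 = m·[0,3] + [p+m+2, p]`. -/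
def ClassA (Q : QuivRel) (st : SigmaTau Q) : Prop :=
  IsGentle Q ∧ ∃ m p : ℕ, ∀ x, fInv Q st x = m * charFn 0 3 x + charFn (p + m + 2) p x

/-- The class `Ã`: gentle quivers with
`f_𝚫 = (m₁+m₂)·[0,3] + [p+m₁, p] + [q+m₂, q]`, `p+m₁ > 0`, `q+m₂ > 0`. -/
def ClassAtilde (Q : QuivRel) (st : SigmaTau Q) : Prop :=
  IsGentle Q ∧ ∃ m1 m2 p q : ℕ, 0 < p + m1 ∧ 0 < q + m2 ∧
    ∀ x, fInv Q st x =
      (m1 + m2) * charFn 0 3 x + charFn (p + m1) p x + charFn (q + m2) q x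

/-- Isomorphism of quivers with relations. -/
def IsoQR (Q Q' : QuivRel) : Prop :=
  ∃ fV fA : ℕ → ℕ,
    Set.BijOn fV ↑Q.V ↑Q'.V ∧ Set.BijOn fA ↑Q.A ↑Q'.A ∧
    (∀ a ∈ Q.A, Q'.src (fA a) = fV (Q.src a) ∧ Q'.tgt (fA a) = fV (Q.tgt a)) ∧
    (∀ a ∈ Q.A, ∀ b ∈ Q.A, ((a, b) ∈ Q.rel ↔ (fA a, fA b) ∈ Q'.rel))

/-- The quiver has no loops. -/
def NoLoops (Q : QuivRel) : Prop := ∀ a ∈ Q.A, Q.src a ≠ Q.tgt a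

/-- The reflection at `x` is defined: every arrow starting at `x` admits a
(necessarily unique) companion arrow ending at `x` not bound by a relation. -/
def CanReflect (Q : QuivRel) (x : ℕ) : Prop :=
  x ∈ Q.V ∧ ∀ a ∈ Q.A, Q.src a = x → ∃ b ∈ Q.A, Q.tgt b = x ∧ (a, b) ∉ Q.rel

/-- `Q'` is the reflection of the gentle loop-free quiver `Q` at the vertex
`x`, following Brenner–Butler tilting. -/
def IsReflection (Q : QuivRel) (x : ℕ) (Q' : QuivRel) : Prop :=
  IsGentle Q ∧ NoLoops Q ∧ CanReflect Q x ∧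
  Q'.V = Q.V ∧ Q'.A = Q.A ∧
  (∀ a ∈ Q.A, Q.tgt a = x → Q'.src a = x ∧ Q'.tgt a = Q.src a) ∧
  (∀ a ∈ Q.A, Q.src a = x →
    ∀ b ∈ Q.A, Q.tgt b = x → (a, b) ∉ Q.rel → Q'.src a = Q.src b) ∧
  (∀ a ∈ Q.A, Q.tgt a ≠ x → Q.src a ≠ x → Q'.src a = Q.src a) ∧
  (∀ a ∈ Q.A, Q.tgt a ≠ x →
    ((∃ b ∈ Q.A, Q.tgt b = x ∧ Q.src b = Q.tgt a ∧ (b, a) ∈ Q.rel) → Q'.tgt a = x) ∧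
    ((¬ ∃ b ∈ Q.A, Q.tgt b = x ∧ Q.src b = Q.tgt a ∧ (b, a) ∈ Q.rel) →
      Q'.tgt a = Q.tgt a)) ∧
  (∀ a b : ℕ, (a, b) ∈ Q'.rel ↔
    (((a, b) ∈ Q.rel ∧ Q.tgt a ≠ x ∧ Q.src a ≠ x) ∨
     (a ∈ Q.A ∧ b ∈ Q.A ∧ Q.src a = x ∧ Q.tgt b = x ∧ (a, b) ∉ Q.rel) ∨
     (a ∈ Q.A ∧ b ∈ Q.A ∧ Q.tgt a = x ∧
       ∃ c ∈ Q.A, c ≠ a ∧ Q.tgt c = x ∧ Q.src c = Q.tgt b ∧ (c, b) ∈ Q.rel)))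

/-- The opposite quiver with relations. -/
def opQR (Q : QuivRel) : QuivRel where
  V := Q.V
  A := Q.A
  src := Q.tgt
  tgt := Q.src
  rel := Q.rel.image fun ρ => (ρ.2, ρ.1)

/-- Coreflection: the dual of reflection. -/
def IsCoreflection (Q : QuivRel) (x : ℕ) (Q' : QuivRel) : Prop :=
  IsReflection (opQR Q) x (opQR Q')

/-- One step of reflection equivalence: a reflection, a coreflection, or an
isomorphism of quivers with relations. -/
def RefStep (Q Q' : QuivRel) : Prop :=
  (∃ x, IsReflection Q x Q') ∨ (∃ x, IsCoreflection Q x Q') ∨ IsoQR Q Q'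

/-- Reflection equivalence: a finite sequence of reflections/coreflections,
up to isomorphism of quivers with relations. -/
def RefEquiv : QuivRel → QuivRel → Prop := Relation.ReflTransGen RefStep

/-- A cyclic orientation of a `1`-cycle quiver without branch arrows (i.e. a
cycle): enumerations of the vertices and arrows by `ZMod n` such that the
`i`-th arrow joins the `i`-th and `(i+1)`-st vertices. -/
structure CyclicOrientation (Q : QuivRel) (n : ℕ) where
  ev : ZMod n → ℕ
  ea : ZMod n → ℕ
  ev_mem : ∀ i, ev i ∈ Q.V
  ea_mem : ∀ i, ea i ∈ Q.A
  ev_inj : Function.Injective ev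
  ea_inj : Function.Injective ea
  ev_surj : ∀ v ∈ Q.V, ∃ i, ev i = v
  ea_surj : ∀ a ∈ Q.A, ∃ i, ea i = a
  compat : ∀ i : ZMod n,
    (Q.src (ea i) = ev i ∧ Q.tgt (ea i) = ev (i + 1)) ∨
    (Q.src (ea i) = ev (i + 1) ∧ Q.tgt (ea i) = ev i)

/-- Clockwise arrow with respect to a cyclic orientation. -/
def Clockwise (Q : QuivRel) {n : ℕ} (co : CyclicOrientation Q n) (a : ℕ) : Prop :=
  a ∈ Q.A ∧ ∃ i : ZMod n, co.ea i = a ∧ Q.src a = co.ev i ∧ Q.tgt a = co.ev (i + 1)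

/-- Anticlockwise arrow with respect to a cyclic orientation. -/
def Anticlockwise (Q : QuivRel) {n : ℕ} (co : CyclicOrientation Q n) (a : ℕ) : Prop :=
  a ∈ Q.A ∧ ∃ i : ZMod n, co.ea i = a ∧ Q.src a = co.ev (i + 1) ∧ Q.tgt a = co.ev i

end GentleQuiv

namespace GentleQuiv

/-! ### Half-vertices and maximal antipaths -/

/-- The source half-vertex of an arrow. -/
def hs {Q : QuivRel} (st : SigmaTau Q) (a : ℕ) : ℕ × ℤ := (Q.src a, st.σ a)

/-- The target half-vertex of an arrow. -/
def ht {Q : QuivRel} (st : SigmaTau Q) (a : ℕ) : ℕ × ℤ := (Q.tgt a, st.τ a)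

theorem hs_inj {Q : QuivRel} (st : SigmaTau Q) {a b : ℕ} (ha : a ∈ Q.A) (hb : b ∈ Q.A)
    (h : hs st a = hs st b) : a = b := by
  by_contra hne
  simp only [hs, Prod.mk.injEq] at h
  have h1 := st.σ_src a ha b hb hne h.1
  have h2 := st.σ_pm b hb
  omega

theorem ht_inj {Q : QuivRel} (st : SigmaTau Q) {a b : ℕ} (ha : a ∈ Q.A) (hb : b ∈ Q.A)
    (h : ht st a = ht st b) : a = b := by
  by_contra hne
  simp only [ht, Prod.mk.injEq] at h
  have h1 := st.τ_tgt a ha b hb hne h.1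
  have h2 := st.τ_pm b hb
  omega

theorem rel_iff_half {Q : QuivRel} (st : SigmaTau Q)
    (hR : ∀ ρ ∈ Q.rel, ρ.1 ∈ Q.A ∧ ρ.2 ∈ Q.A ∧ Q.src ρ.1 = Q.tgt ρ.2) {a b : ℕ} :
    (a, b) ∈ Q.rel ↔ a ∈ Q.A ∧ b ∈ Q.A ∧ hs st a = ht st b := by
  constructor
  · intro h
    obtain ⟨h1, h2, h3⟩ := hR _ h
    refine ⟨h1, h2, ?_⟩
    simp only [hs, ht, Prod.mk.injEq]
    exact ⟨h3, (st.rel_iff a h1 b h2 h3).1 h⟩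
  · rintro ⟨h1, h2, h3⟩
    simp only [hs, ht, Prod.mk.injEq] at h3
    exact (st.rel_iff a h1 b h2 h3.1).2 h3.2

/-- Characterisation of `𝒩` for threads of positive length. -/
theorem inN_arrows_iff {Q : QuivRel} (st : SigmaTau Q)
    (hR : ∀ ρ ∈ Q.rel, ρ.1 ∈ Q.A ∧ ρ.2 ∈ Q.A ∧ Q.src ρ.1 = Q.tgt ρ.2) (l : List ℕ) :
    InN Q st (.arrows l) ↔ ∃ hl : 0 < l.length, (∀ a ∈ l, a ∈ Q.A) ∧
      (∀ i (hi : i + 1 < l.length), hs st l[i] = ht st l[i + 1]) ∧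
      (∀ a ∈ Q.A, hs st a ≠ ht st l[0]) ∧
      (∀ b ∈ Q.A, ht st b ≠ hs st (l[l.length - 1])) := by
  rcases l with _ | ⟨x, t⟩
  · simp [InN, IsAntiThread, IsAntiList]
  · have e1 : (x :: t).getLast! = (x :: t)[(x :: t).length - 1] := by
      rw [List.getLast!_cons_eq_getLastD, ← List.getLast_eq_getElem (by simp)]
      simp [List.getLast_eq_getLastD]
    unfold InN IsAntiThread IsAntiList
    simp only [Thread.target, Thread.tauAnti, Thread.source, Thread.sigma, e1]
    simp only [hs, ht, Prod.mk.injEq, ne_eq, not_and, not_exists]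
    rw [show (x :: t).Chain' (fun a b => (a, b) ∈ Q.rel) ↔ _ from List.isChain_iff_getElem]
    constructor
    · rintro ⟨⟨-, h1, h2⟩, h3, h4⟩
      refine ⟨by simp, h1, ?_, h3, h4⟩
      intro i hi
      have := (rel_iff_half st hR).1 (h2 i hi)
      simpa [hs, ht] using this.2.2
    · rintro ⟨h0, h1, h2, h3, h4⟩
      refine ⟨⟨by simp, h1, ?_⟩, h3, h4⟩
      intro i hi
      apply (rel_iff_half st hR).2
      refine ⟨h1 _ (List.getElem_mem _), h1 _ (List.getElem_mem _), ?_⟩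
      simpa [hs, ht] using h2 i hi

/-- An antipath whose end cannot be prolonged (a half-maximal antipath). -/
def HalfMax {Q : QuivRel} (st : SigmaTau Q) (l : List ℕ) : Prop :=
  ∃ hl : 0 < l.length, (∀ a ∈ l, a ∈ Q.A) ∧
      (∀ i (hi : i + 1 < l.length), hs st l[i] = ht st l[i + 1]) ∧
      (∀ a ∈ Q.A, hs st a ≠ ht st l[0])

theorem HalfMax.index {Q : QuivRel} {st : SigmaTau Q} {l l' : List ℕ} (h : HalfMax st l)
    (h' : HalfMax st l') : ∀ i j (hi : i < l.length) (hj : j < l'.length), l[i] = l'[j] →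
      i = j ∧ l[0]'(by omega) = l'[0]'(by omega) := by
  obtain ⟨h0, h1, h2, h3⟩ := h
  obtain ⟨h0', h1', h2', h3'⟩ := h'
  intro i
  induction i with
  | zero =>
    intro j hi hj he
    rcases j with _ | j
    · exact ⟨rfl, he⟩
    · exact absurd (h2' j hj) (by rw [← he]; exact h3 _ (h1' _ (List.getElem_mem _)))
  | succ i ih =>
    intro j hi hj he
    rcases j with _ | j
    · exact absurd (h2 i hi) (by rw [he]; exact h3' _ (h1 _ (List.getElem_mem _)))
    · have e : l[i] = l'[j] := by
        apply hs_inj st (h1 _ (List.getElem_mem _)) (h1' _ (List.getElem_mem _))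
        rw [h2 i hi, h2' j hj, he]
      obtain ⟨r1, r2⟩ := ih j (by omega) (by omega) e
      exact ⟨by omega, r2⟩

theorem HalfMax.nodup {Q : QuivRel} {st : SigmaTau Q} {l : List ℕ} (h : HalfMax st l) :
    l.Nodup := by
  rw [List.nodup_iff_injective_getElem]
  intro i j hij
  have := (h.index h i j i.2 j.2 hij).1
  exact Fin.ext this

theorem HalfMax.length_le {Q : QuivRel} {st : SigmaTau Q} {l : List ℕ} (h : HalfMax st l) :
    l.length ≤ Q.A.card := by
  rw [← List.toFinset_card_of_nodup h.nodup]
  apply Finset.card_le_card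
  intro a ha
  exact h.2.1 a (by simpa using ha)

/-- Extending a half-maximal antipath to a maximal one. -/
theorem HalfMax.extend {Q : QuivRel} {st : SigmaTau Q}
    (hR : ∀ ρ ∈ Q.rel, ρ.1 ∈ Q.A ∧ ρ.2 ∈ Q.A ∧ Q.src ρ.1 = Q.tgt ρ.2) :
    ∀ (n : ℕ) (l : List ℕ), HalfMax st l → Q.A.card - l.length = n →
      ∃ l', InN Q st (.arrows l') ∧ l <+: l' := by
  intro n
  induction n using Nat.strong_induction_on with
  | _ n ih =>
    intro l hl hn
    by_cases hc : ∃ c ∈ Q.A, ht st c = hs st (l[l.length - 1]'(by have := hl.1; omega))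
    · obtain ⟨c, hcA, hc⟩ := hc
      have hl' : HalfMax st (l ++ [c]) := by
        obtain ⟨h0, h1, h2, h3⟩ := hl
        refine ⟨by simp, ?_, ?_, ?_⟩
        · intro a ha
          simp only [List.mem_append, List.mem_singleton] at ha
          rcases ha with ha | rfl
          · exact h1 a ha
          · exact hcA
        · intro i hi
          simp only [List.length_append, List.length_singleton] at hi
          by_cases hlt : i + 1 < l.length
          · rw [List.getElem_append_left (by omega), List.getElem_append_left hlt]
            exact h2 i hlt
          · have : i = l.length - 1 := by omega
            subst this
            rw [List.getElem_append_left (by omega), List.getElem_append_right (by omega)]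
            simp [hc]
        · rw [List.getElem_append_left h0]
          exact h3
      have hle := hl'.length_le
      simp only [List.length_append, List.length_singleton] at hle
      obtain ⟨l', h1, h2⟩ := ih (Q.A.card - (l ++ [c]).length)
        (by simp only [List.length_append, List.length_singleton]; omega) (l ++ [c]) hl' rfl
      exact ⟨l', h1, (List.prefix_append l [c]).trans h2⟩
    · push Not at hc
      refine ⟨l, ?_, List.prefix_rfl⟩
      rw [inN_arrows_iff st hR]
      obtain ⟨h0, h1, h2, h3⟩ := hl
      exact ⟨h0, h1, h2, h3, hc⟩

theorem halfMax_of_inN {Q : QuivRel} {st : SigmaTau Q}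
    (hR : ∀ ρ ∈ Q.rel, ρ.1 ∈ Q.A ∧ ρ.2 ∈ Q.A ∧ Q.src ρ.1 = Q.tgt ρ.2) {l : List ℕ}
    (h : InN Q st (.arrows l)) : HalfMax st l := by
  obtain ⟨h0, h1, h2, h3, -⟩ := (inN_arrows_iff st hR l).1 h
  exact ⟨h0, h1, h2, h3⟩

/-- Maximal antipaths with the same head agree. -/
theorem inN_head_unique {Q : QuivRel} {st : SigmaTau Q}
    (hR : ∀ ρ ∈ Q.rel, ρ.1 ∈ Q.A ∧ ρ.2 ∈ Q.A ∧ Q.src ρ.1 = Q.tgt ρ.2) {l l' : List ℕ}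
    (h : InN Q st (.arrows l)) (h' : InN Q st (.arrows l'))
    (e : ∀ (h0 : 0 < l.length) (h0' : 0 < l'.length), l[0] = l'[0]) : l = l' := by
  obtain ⟨h0, h1, h2, h3, h4⟩ := (inN_arrows_iff st hR l).1 h
  obtain ⟨h0', h1', h2', h3', h4'⟩ := (inN_arrows_iff st hR l').1 h'
  have key : ∀ i (hi : i < l.length) (hi' : i < l'.length), l[i] = l'[i] := by
    intro i
    induction i with
    | zero => intro hi hi'; exact e _ _
    | succ i ih =>
      intro hi hi'
      apply ht_inj st (h1 _ (List.getElem_mem _)) (h1' _ (List.getElem_mem _))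
      rw [← h2 i hi, ← h2' i hi', ih]
  have hlen : l.length = l'.length := by
    rcases lt_trichotomy l.length l'.length with hlt | heq | hlt
    · exfalso
      refine h4 (l'[l.length]) (h1' _ (List.getElem_mem _)) ?_
      have := h2' (l.length - 1) (by omega)
      rw [key (l.length - 1) (by omega) (by omega), this]
      congr 2
      omega
    · exact heq
    · exfalso
      refine h4' (l[l'.length]) (h1 _ (List.getElem_mem _)) ?_
      have := h2 (l'.length - 1) (by omega)
      rw [← key (l'.length - 1) (by omega) (by omega), this]
      congr 2
      omega
  exact List.ext_getElem hlen key

theorem inN_mem_unique {Q : QuivRel} {st : SigmaTau Q}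
    (hR : ∀ ρ ∈ Q.rel, ρ.1 ∈ Q.A ∧ ρ.2 ∈ Q.A ∧ Q.src ρ.1 = Q.tgt ρ.2) {l l' : List ℕ}
    (h : InN Q st (.arrows l)) (h' : InN Q st (.arrows l')) {a : ℕ} (ha : a ∈ l) (ha' : a ∈ l') :
    l = l' := by
  obtain ⟨i, hi, ei⟩ := List.mem_iff_getElem.1 ha
  obtain ⟨j, hj, ej⟩ := List.mem_iff_getElem.1 ha'
  have := (halfMax_of_inN hR h).index (halfMax_of_inN hR h') i j hi hj (ei.trans ej.symm)
  exact inN_head_unique hR h h' (fun _ _ => this.2)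

/-- A set of arrows closed under going forward avoids all maximal antipaths. -/
theorem inC_of_closed {Q : QuivRel} {st : SigmaTau Q}
    (hR : ∀ ρ ∈ Q.rel, ρ.1 ∈ Q.A ∧ ρ.2 ∈ Q.A ∧ Q.src ρ.1 = Q.tgt ρ.2) (P : Set ℕ)
    (hPA : ∀ a ∈ P, a ∈ Q.A) (hP : ∀ a ∈ P, ∃ c ∈ P, hs st c = ht st a) {a : ℕ} (ha : a ∈ P) :
    InC Q st a := by
  refine ⟨hPA a ha, ?_⟩
  rintro ⟨l, hl, hal⟩
  obtain ⟨h0, h1, h2, h3, h4⟩ := (inN_arrows_iff st hR l).1 hl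
  have key : ∀ i (hi : i < l.length), l[i] ∉ P := by
    intro i
    induction i with
    | zero =>
      intro hi hp
      obtain ⟨c, hc, e⟩ := hP _ hp
      exact h3 c (hPA c hc) e
    | succ i ih =>
      intro hi hp
      obtain ⟨c, hc, e⟩ := hP _ hp
      rw [← h2 i hi] at e
      have := hs_inj st (hPA c hc) (h1 _ (List.getElem_mem _)) e
      exact ih (by omega) (this ▸ hc)
  obtain ⟨i, hi, ei⟩ := List.mem_iff_getElem.1 hal
  exact key i hi (ei ▸ ha)

/-- The forward map on `𝒞`. -/
theorem inC_forward {Q : QuivRel} {st : SigmaTau Q}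
    (hR : ∀ ρ ∈ Q.rel, ρ.1 ∈ Q.A ∧ ρ.2 ∈ Q.A ∧ Q.src ρ.1 = Q.tgt ρ.2) {a : ℕ}
    (ha : InC Q st a) : ∃ c, InC Q st c ∧ hs st c = ht st a := by
  by_cases h : ∃ c ∈ Q.A, hs st c = ht st a
  · obtain ⟨c, hcA, hc⟩ := h
    refine ⟨c, ⟨hcA, ?_⟩, hc⟩
    rintro ⟨l, hl, hcl⟩
    obtain ⟨h0, h1, h2, h3, h4⟩ := (inN_arrows_iff st hR l).1 hl
    obtain ⟨i, hi, ei⟩ := List.mem_iff_getElem.1 hcl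
    by_cases hlt : i + 1 < l.length
    · have := h2 i hlt
      rw [ei, hc] at this
      have e := ht_inj st ha.1 (h1 _ (List.getElem_mem _)) this
      exact ha.2 ⟨l, hl, e ▸ List.getElem_mem _⟩
    · have : i = l.length - 1 := by omega
      subst this
      exact h4 a ha.1 (by rw [ei, hc])
  · push Not at h
    have hm : HalfMax st [a] := ⟨by simp, by simpa using ha.1, by simp, by simpa using h⟩
    obtain ⟨l, h1, h2⟩ := HalfMax.extend hR _ [a] hm rfl
    exact absurd ⟨l, h1, h2.subset (by simp)⟩ ha.2

/-- The target half-vertex of an antipath. -/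
def thr {Q : QuivRel} (st : SigmaTau Q) (w : Thread) : ℕ × ℤ := (w.target Q, w.tauAnti st)

theorem thr_arrows {Q : QuivRel} (st : SigmaTau Q) {l : List ℕ} (h : 0 < l.length) :
    thr st (.arrows l) = ht st l[0] := by
  rcases l with _ | ⟨x, t⟩
  · simp at h
  · simp [thr, ht, Thread.target, Thread.tauAnti]

/-- Half-vertices. -/
def halves (Q : QuivRel) : Finset (ℕ × ℤ) := Q.V ×ˢ {1, -1}

theorem thr_bijOn {Q : QuivRel} {st : SigmaTau Q}
    (hV : ∀ a ∈ Q.A, Q.src a ∈ Q.V ∧ Q.tgt a ∈ Q.V)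
    (hR : ∀ ρ ∈ Q.rel, ρ.1 ∈ Q.A ∧ ρ.2 ∈ Q.A ∧ Q.src ρ.1 = Q.tgt ρ.2) :
    Set.BijOn (thr st) {w | InN Q st w} ↑(halves Q \ Q.A.image (hs st)) := by
  refine ⟨?_, ?_, ?_⟩
  · intro w hw
    simp only [Finset.coe_sdiff, Finset.coe_image, Set.mem_sdiff, Finset.mem_coe, Set.mem_image,
      not_exists, not_and]
    rcases w with ⟨x, ε⟩ | l
    · obtain ⟨⟨h1, h2⟩, h3, h4⟩ := hw
      refine ⟨by simp [halves, thr, Thread.target, Thread.tauAnti, h1, h2], ?_⟩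
      intro a ha e
      apply h3
      simp only [hs, thr, Prod.mk.injEq] at e
      exact ⟨a, ha, e⟩
    · obtain ⟨h0, h1, h2, h3, h4⟩ := (inN_arrows_iff st hR l).1 hw
      rw [thr_arrows st h0]
      refine ⟨?_, h3⟩
      have := h1 _ (List.getElem_mem h0)
      simp [halves, ht, (hV _ this).2, st.τ_pm _ this]
  · intro w hw w' hw' e
    rcases w with ⟨x, ε⟩ | l <;> rcases w' with ⟨x', ε'⟩ | l'
    · simp only [thr, Thread.target, Thread.tauAnti, Prod.mk.injEq] at e
      rw [e.1, e.2]
    · exfalso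
      obtain ⟨h0, h1, -⟩ := (inN_arrows_iff st hR l').1 hw'
      rw [thr_arrows st h0] at e
      apply hw.2.2
      simp only [thr, ht, Prod.mk.injEq] at e
      exact ⟨l'[0], h1 _ (List.getElem_mem _), e.1.symm, e.2.symm⟩
    · exfalso
      obtain ⟨h0, h1, -⟩ := (inN_arrows_iff st hR l).1 hw
      rw [thr_arrows st h0] at e
      apply hw'.2.2
      simp only [thr, ht, Prod.mk.injEq] at e
      exact ⟨l[0], h1 _ (List.getElem_mem _), e.1, e.2⟩
    · obtain ⟨h0, h1, -⟩ := (inN_arrows_iff st hR l).1 hw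
      obtain ⟨h0', h1', -⟩ := (inN_arrows_iff st hR l').1 hw'
      rw [thr_arrows st h0, thr_arrows st h0'] at e
      congr 1
      refine inN_head_unique hR hw hw' (fun _ _ => ?_)
      exact ht_inj st (h1 _ (List.getElem_mem _)) (h1' _ (List.getElem_mem _)) e
  · rintro ⟨x, ε⟩ h
    simp only [Finset.coe_sdiff, Finset.coe_image, Set.mem_sdiff, Finset.mem_coe, Set.mem_image,
      not_exists, not_and] at h
    obtain ⟨h1, h2⟩ := h
    by_cases hb : ∃ b ∈ Q.A, ht st b = (x, ε)
    · obtain ⟨b, hbA, hb⟩ := hb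
      have hm : HalfMax st [b] :=
        ⟨by simp, by simpa using hbA, by simp, by simpa [hb] using h2⟩
      obtain ⟨l, hl, hpre⟩ := HalfMax.extend hR _ [b] hm rfl
      refine ⟨.arrows l, hl, ?_⟩
      obtain ⟨t, rfl⟩ := hpre
      rw [thr_arrows st (by simp)]
      simpa using hb
    · refine ⟨.triv x ε, ⟨?_, ?_, ?_⟩, rfl⟩
      · simpa [halves, IsAntiThread] using h1
      · rintro ⟨a, ha, e1, e2⟩
        apply h2 a ha
        simp only [hs, Prod.mk.injEq]
        exact ⟨e1, e2⟩
      · rintro ⟨b, hbA, e1, e2⟩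
        apply hb
        refine ⟨b, hbA, ?_⟩
        simp only [ht, Prod.mk.injEq]
        exact ⟨e1, e2⟩

theorem finite_N {Q : QuivRel} {st : SigmaTau Q}
    (hV : ∀ a ∈ Q.A, Q.src a ∈ Q.V ∧ Q.tgt a ∈ Q.V)
    (hR : ∀ ρ ∈ Q.rel, ρ.1 ∈ Q.A ∧ ρ.2 ∈ Q.A ∧ Q.src ρ.1 = Q.tgt ρ.2) :
    {w | InN Q st w}.Finite :=
  (thr_bijOn hV hR).finite_iff_finite.2 (Finset.finite_toSet _)

theorem card_N {Q : QuivRel} {st : SigmaTau Q}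
    (hV : ∀ a ∈ Q.A, Q.src a ∈ Q.V ∧ Q.tgt a ∈ Q.V)
    (hR : ∀ ρ ∈ Q.rel, ρ.1 ∈ Q.A ∧ ρ.2 ∈ Q.A ∧ Q.src ρ.1 = Q.tgt ρ.2)
    (NF : Finset Thread) (hNF : ∀ w, w ∈ NF ↔ InN Q st w) :
    NF.card + Q.A.card = 2 * Q.V.card := by
  classical
  have hb := thr_bijOn (st := st) hV hR
  have hset : {w | InN Q st w} = (NF : Set Thread) := by ext w; simp [hNF]
  rw [hset] at hb
  have h1 : NF.card = (halves Q \ Q.A.image (hs st)).card :=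
    Finset.card_bij (fun w _ => thr st w) (fun w hw => hb.mapsTo hw)
      (fun w hw w' hw' e => hb.injOn hw hw' e)
      (fun b hb' => by
        obtain ⟨w, hw, e⟩ := hb.surjOn hb'
        exact ⟨w, hw, e⟩)
  have hsub : Q.A.image (hs st) ⊆ halves Q := by
    intro h hh
    obtain ⟨a, ha, rfl⟩ := Finset.mem_image.1 hh
    simp [halves, hs, (hV a ha).1, st.σ_pm a ha]
  have h2 := Finset.card_sdiff_add_card_eq_card hsub
  have h3 : (Q.A.image (hs st)).card = Q.A.card :=
    Finset.card_image_of_injOn (fun a ha b hb e => hs_inj st ha hb e)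
  have h4 : (halves Q).card = Q.V.card * 2 := by simp [halves]
  omega

/-- The arrows of a thread. -/
def Thread.arrs : Thread → Finset ℕ
  | .triv _ _ => ∅
  | .arrows l => l.toFinset

theorem sum_len {Q : QuivRel} {st : SigmaTau Q}
    (hR : ∀ ρ ∈ Q.rel, ρ.1 ∈ Q.A ∧ ρ.2 ∈ Q.A ∧ Q.src ρ.1 = Q.tgt ρ.2)
    (NF : Finset Thread) (hNF : ∀ w, w ∈ NF ↔ InN Q st w)
    (CF : Finset ℕ) (hCF : ∀ a, a ∈ CF ↔ InC Q st a) :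
    (∑ w ∈ NF, Thread.len w) + CF.card = Q.A.card := by
  classical
  have hd : (NF : Set Thread).PairwiseDisjoint Thread.arrs := by
    intro w hw w' hw' hne
    rw [Function.onFun, Finset.disjoint_left]
    intro a ha ha'
    rcases w with ⟨x, ε⟩ | l <;> rcases w' with ⟨x', ε'⟩ | l' <;>
      simp only [Thread.arrs, List.mem_toFinset, Finset.notMem_empty] at ha ha'
    apply hne
    rw [inN_mem_unique hR ((hNF _).1 hw) ((hNF _).1 hw') ha ha']
  have h1 : (NF.biUnion Thread.arrs).card = ∑ w ∈ NF, Thread.len w := by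
    rw [Finset.card_biUnion hd]
    apply Finset.sum_congr rfl
    intro w hw
    rcases w with ⟨x, ε⟩ | l
    · rfl
    · exact List.toFinset_card_of_nodup (halfMax_of_inN hR ((hNF _).1 hw)).nodup
  have h2 : Q.A \ CF = NF.biUnion Thread.arrs := by
    ext a
    simp only [Finset.mem_sdiff, hCF, Finset.mem_biUnion, hNF]
    constructor
    · rintro ⟨h1, h2⟩
      have : ∃ l, InN Q st (.arrows l) ∧ a ∈ l := by
        by_contra hc
        exact h2 ⟨h1, hc⟩
      obtain ⟨l, hl, hal⟩ := this
      exact ⟨.arrows l, hl, by simpa [Thread.arrs] using hal⟩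
    · rintro ⟨w, hw, haw⟩
      rcases w with ⟨x, ε⟩ | l
      · simp [Thread.arrs] at haw
      · simp only [Thread.arrs, List.mem_toFinset] at haw
        exact ⟨(halfMax_of_inN hR hw).2.1 a haw, fun h => h.2 ⟨l, hw, haw⟩⟩
  have hsub : CF ⊆ Q.A := fun a ha => ((hCF a).1 ha).1
  rw [← h1, ← h2]
  exact Finset.card_sdiff_add_card_eq_card hsub


/-! ### Orbit counting -/

/-- Orbit of `w` under the equivalence closure of `r`. -/
def orb {X : Type} (r : X → X → Prop) (w : X) : Set X := {w' | Relation.EqvGen r w w'}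

theorem orb_subset {X : Type} {r : X → X → Prop} (P : Set X)
    (hr : ∀ w w', r w w' → (w ∈ P ↔ w' ∈ P)) {w : X} (hw : w ∈ P) : orb r w ⊆ P := by
  intro w' h
  have : w ∈ P ↔ w' ∈ P := by
    clear hw
    induction h with
    | rel _ _ h => exact hr _ _ h
    | refl => exact Iff.rfl
    | symm _ _ _ ih => exact ih.symm
    | trans _ _ _ _ _ ih1 ih2 => tauto
  exact this.1 hw

theorem sum_orb {X : Type} (r : X → X → Prop) (NF : Finset X)
    (hr : ∀ w w', r w w' → (w ∈ NF ∧ w' ∈ NF)) (wt : X → ℕ) (OF : Finset (Set X))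
    (hOF : ∀ O, O ∈ OF ↔ ∃ w ∈ NF, O = orb r w) :
    ∑ O ∈ OF, ∑ᶠ w ∈ O, wt w = ∑ w ∈ NF, wt w := by
  classical
  rw [← Finset.sum_fiberwise_of_maps_to (s := NF) (t := OF) (g := orb r)
    (fun w hw => (hOF _).2 ⟨w, hw, rfl⟩)]
  apply Finset.sum_congr rfl
  intro O hO
  obtain ⟨w, hw, rfl⟩ := (hOF O).1 hO
  have hset : orb r w = ((NF.filter fun x => orb r x = orb r w : Finset X) : Set X) := by
    ext x
    simp only [Finset.coe_filter, Set.mem_ofPred_eq]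
    constructor
    · intro hx
      refine ⟨orb_subset (r := r) (NF : Set X) ?_ hw hx, ?_⟩
      · intro a b hab
        have := hr a b hab
        simp [this.1, this.2]
      · ext y
        constructor
        · intro hy; exact Relation.EqvGen.trans _ _ _ hx hy
        · intro hy; exact Relation.EqvGen.trans _ _ _ (Relation.EqvGen.symm _ _ hx) hy
    · rintro ⟨-, h⟩
      rw [← h]
      exact Relation.EqvGen.refl x
  rw [hset]
  rw [finsum_mem_coe_finset]
  apply Finset.sum_congr _ (fun _ _ => rfl)
  rw [← hset]

theorem ncard_eq_finsum {X : Type} (O : Set X) (hO : O.Finite) :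
    O.ncard = ∑ᶠ _w ∈ O, 1 := by
  rw [Set.ncard_eq_toFinset_card O hO, finsum_mem_eq_finite_toFinset_sum _ hO]
  simp

/-- Numerical consequences of membership in `Ã`. -/
theorem atilde_counts {Q : QuivRel} {st : SigmaTau Q}
    (hV : ∀ a ∈ Q.A, Q.src a ∈ Q.V ∧ Q.tgt a ∈ Q.V)
    (hR : ∀ ρ ∈ Q.rel, ρ.1 ∈ Q.A ∧ ρ.2 ∈ Q.A ∧ Q.src ρ.1 = Q.tgt ρ.2)
    {m1 m2 p q : ℕ} (hp : 0 < p + m1) (hq : 0 < q + m2)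
    (hf : ∀ x, fInv Q st x =
      (m1 + m2) * charFn 0 3 x + charFn (p + m1) p x + charFn (q + m2) q x)
    (CF : Finset ℕ) (hCF : ∀ a, a ∈ CF ↔ InC Q st a) :
    (∀ a, InC Q st a → (orb (PsiRel Q st) a).ncard = 3) ∧
    CF.card = 3 * (m1 + m2) ∧ Q.A.card = Q.V.card + (m1 + m2) := by
  classical
  have hfin := finite_N (st := st) hV hR
  set NF : Finset Thread := hfin.toFinset with hNFdef
  have hNF : ∀ w, w ∈ NF ↔ InN Q st w := by intro w; simp [hNFdef]
  have hNr : ∀ w w', PhiRel Q st w w' → (w ∈ NF ∧ w' ∈ NF) := by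
    intro w w' h
    rw [hNF, hNF]
    exact ⟨h.1, h.2.1⟩
  have hCr : ∀ w w', PsiRel Q st w w' → (w ∈ CF ∧ w' ∈ CF) := by
    intro w w' h
    rw [hCF, hCF]
    exact ⟨h.1, h.2.1⟩
  set NO : Finset (Set Thread) := NF.image (orb (PhiRel Q st)) with hNO
  set CO : Finset (Set ℕ) := CF.image (orb (PsiRel Q st)) with hCO
  have hNO' : ∀ O, O ∈ NO ↔ NOrbit Q st O := by
    intro O
    simp only [hNO, Finset.mem_image, hNF, NOrbit, orb]
    constructor
    · rintro ⟨w, h, rfl⟩; exact ⟨w, h, rfl⟩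
    · rintro ⟨w, h, rfl⟩; exact ⟨w, h, rfl⟩
  have hCO' : ∀ O, O ∈ CO ↔ COrbit Q st O := by
    intro O
    simp only [hCO, Finset.mem_image, hCF, COrbit, orb]
    constructor
    · rintro ⟨w, h, rfl⟩; exact ⟨w, h, rfl⟩
    · rintro ⟨w, h, rfl⟩; exact ⟨w, h, rfl⟩
  have hNfin : ∀ O ∈ NO, O.Finite := by
    intro O hO
    obtain ⟨w, hw, rfl⟩ := Finset.mem_image.1 hO
    refine (Finset.finite_toSet NF).subset (orb_subset _ ?_ hw)
    intro a b hab
    have := hNr a b hab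
    simp [this.1, this.2]
  have hCfin : ∀ O ∈ CO, O.Finite := by
    intro O hO
    obtain ⟨w, hw, rfl⟩ := Finset.mem_image.1 hO
    refine (Finset.finite_toSet CF).subset (orb_subset _ ?_ hw)
    intro a b hab
    have := hCr a b hab
    simp [this.1, this.2]
  have hNpos : ∀ O ∈ NO, 0 < pN O := by
    intro O hO
    have hO2 := hNfin O hO
    obtain ⟨w, hw, rfl⟩ := Finset.mem_image.1 hO
    exact (Set.ncard_pos hO2).2 ⟨w, Relation.EqvGen.refl w⟩
  -- the invariant in terms of finsets
  have hf' : ∀ x : ℕ × ℕ, (NO.filter fun O => (pN O, qN O) = x).card +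
      (CO.filter fun O => (0, O.ncard) = x).card =
      (m1 + m2) * charFn 0 3 x + charFn (p + m1) p x + charFn (q + m2) q x := by
    intro x
    rw [← hf x]
    unfold fInv
    congr 1
    · rw [← Set.ncard_coe_finset]
      congr 1
      ext O
      simp [hNO', Prod.ext_iff]
    · rw [← Set.ncard_coe_finset]
      congr 1
      ext O
      simp only [Finset.coe_filter, Set.mem_ofPred_eq, hCO', Prod.ext_iff]
      tauto
  have hsplit : ∀ g : ℕ × ℕ → ℕ, ∑ O ∈ NO, g (pN O, qN O) + ∑ O ∈ CO, g (0, O.ncard) =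
      (m1 + m2) * g (0, 3) + g (p + m1, p) + g (q + m2, q) := by
    intro g
    set K : Finset (ℕ × ℕ) := NO.image (fun O => (pN O, qN O)) ∪ CO.image (fun O => (0, O.ncard)) ∪
      {(0, 3), (p + m1, p), (q + m2, q)} with hK
    have e1 : ∑ O ∈ NO, g (pN O, qN O) =
        ∑ x ∈ K, (NO.filter fun O => (pN O, qN O) = x).card * g x := by
      rw [← Finset.sum_fiberwise_of_maps_to (s := NO) (t := K) (g := fun O => (pN O, qN O))
        (fun O hO => by
          simp only [hK, Finset.mem_union]
          exact Or.inl (Or.inl (Finset.mem_image_of_mem _ hO)))]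
      apply Finset.sum_congr rfl
      intro x _
      rw [Finset.sum_congr rfl (g := fun _ => g x)]
      · simp
      · intro O hO
        rw [(Finset.mem_filter.1 hO).2]
    have e2 : ∑ O ∈ CO, g (0, O.ncard) =
        ∑ x ∈ K, (CO.filter fun O => (0, O.ncard) = x).card * g x := by
      rw [← Finset.sum_fiberwise_of_maps_to (s := CO) (t := K) (g := fun O => (0, O.ncard))
        (fun O hO => by
          simp only [hK, Finset.mem_union]
          exact Or.inl (Or.inr (Finset.mem_image_of_mem _ hO)))]
      apply Finset.sum_congr rfl
      intro x _
      rw [Finset.sum_congr rfl (g := fun _ => g x)]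
      · simp
      · intro O hO
        rw [(Finset.mem_filter.1 hO).2]
    have ech : ∀ a b : ℕ, (a, b) ∈ K → ∑ x ∈ K, charFn a b x * g x = g (a, b) := by
      intro a b hab
      simp only [charFn, ite_mul, one_mul, zero_mul]
      rw [Finset.sum_ite_eq' K (a, b)]
      simp [hab]
    rw [e1, e2, ← Finset.sum_add_distrib]
    rw [Finset.sum_congr rfl (g := fun x => (m1 + m2) * (charFn 0 3 x * g x) +
      charFn (p + m1) p x * g x + charFn (q + m2) q x * g x)]
    · rw [Finset.sum_add_distrib, Finset.sum_add_distrib, ← Finset.mul_sum,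
        ech _ _ (by simp [hK]), ech _ _ (by simp [hK]), ech _ _ (by simp [hK])]
    · intro x _
      rw [← add_mul, hf' x]
      ring
  have hC3 : ∀ O ∈ CO, O.ncard = 3 := by
    intro O hO
    by_contra hne
    have := hf' (0, O.ncard)
    have hpos : 0 < (CO.filter fun O' => ((0 : ℕ), O'.ncard) = (0, O.ncard)).card :=
      Finset.card_pos.2 ⟨O, by simp [hO]⟩
    have hz : (m1 + m2) * charFn 0 3 (0, O.ncard) + charFn (p + m1) p (0, O.ncard) +
        charFn (q + m2) q (0, O.ncard) = 0 := by
      have h1 : p + m1 ≠ 0 := by omega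
      have h2 : q + m2 ≠ 0 := by omega
      simp only [charFn, Prod.mk.injEq]
      rw [if_neg (by tauto), if_neg (by omega), if_neg (by omega)]
      simp
    omega
  -- number of `𝒞`-orbits
  have hCcard : CO.card = m1 + m2 := by
    have := hsplit (fun x => if x.1 = 0 then 1 else 0)
    simp only [if_true] at this
    rw [Finset.sum_eq_zero (s := NO) (fun O hO => by
      have := hNpos O hO
      rw [if_neg (by omega)]), if_neg (by omega), if_neg (by omega)] at this
    simpa using this
  have hP : ∑ O ∈ NO, pN O = (p + m1) + (q + m2) := by
    have := hsplit (fun x => x.1)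
    simpa using this
  have hQ : ∑ O ∈ NO, qN O = p + q := by
    have := hsplit (fun x => if x.1 = 0 then 0 else x.2)
    simp only [if_true] at this
    rw [if_neg (by omega), if_neg (by omega)] at this
    rw [Finset.sum_congr rfl (g := fun O => qN O) (fun O hO => by
      have := hNpos O hO
      rw [if_neg (by omega)])] at this
    simpa using this
  have hNOo : ∀ O, O ∈ NO ↔ ∃ w ∈ NF, O = orb (PhiRel Q st) w := by
    intro O; rw [hNO, Finset.mem_image]; simp only [eq_comm]
  have hCOo : ∀ O, O ∈ CO ↔ ∃ w ∈ CF, O = orb (PsiRel Q st) w := by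
    intro O; rw [hCO, Finset.mem_image]; simp only [eq_comm]
  have hP' : ∑ O ∈ NO, pN O = NF.card := by
    rw [Finset.card_eq_sum_ones, ← sum_orb _ NF hNr (fun _ => 1) NO hNOo]
    exact Finset.sum_congr rfl (fun O hO => ncard_eq_finsum O (hNfin O hO))
  have hQ' : ∑ O ∈ NO, qN O = ∑ w ∈ NF, Thread.len w := by
    rw [← sum_orb _ NF hNr Thread.len NO hNOo]
    rfl
  have hC' : CF.card = 3 * (m1 + m2) := by
    rw [Finset.card_eq_sum_ones, ← sum_orb _ CF hCr (fun _ => 1) CO hCOo]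
    rw [Finset.sum_congr rfl (g := fun _ => 3)
      (fun O hO => by rw [← ncard_eq_finsum O (hCfin O hO), hC3 O hO])]
    simp [hCcard]
    ring
  refine ⟨?_, hC', ?_⟩
  · intro a ha
    exact hC3 _ ((hCOo _).2 ⟨a, (hCF a).2 ha, rfl⟩)
  · have k1 := card_N (st := st) hV hR NF hNF
    have k2 := sum_len (st := st) hR NF hNF CF hCF
    omega

/-! ### Triangles -/

theorem IsTriangleTriple.rotate {Q : QuivRel} {a b c : ℕ} (h : IsTriangleTriple Q a b c) :
    IsTriangleTriple Q b c a := by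
  obtain ⟨⟨h1, h2, h3, h4, h5, h6, h7, h8, h9⟩, r1, r2, r3⟩ := h
  exact ⟨⟨h2, h3, h1, h5, h6.symm, h4.symm, h8, h9, h7⟩, r2, r3, r1⟩

theorem triangle_inC {Q : QuivRel} {st : SigmaTau Q}
    (hR : ∀ ρ ∈ Q.rel, ρ.1 ∈ Q.A ∧ ρ.2 ∈ Q.A ∧ Q.src ρ.1 = Q.tgt ρ.2)
    {a b c : ℕ} (h : IsTriangleTriple Q a b c) : InC Q st a := by
  obtain ⟨⟨h1, h2, h3, -⟩, r1, r2, r3⟩ := h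
  have r1 := ((rel_iff_half st hR).1 r1).2.2
  have r2 := ((rel_iff_half st hR).1 r2).2.2
  have r3 := ((rel_iff_half st hR).1 r3).2.2
  refine inC_of_closed hR {a, b, c} ?_ ?_ (by simp)
  · rintro x (rfl | rfl | rfl) <;> assumption
  · rintro x (rfl | rfl | rfl)
    · exact ⟨c, by simp, r3⟩
    · exact ⟨a, by simp, r1⟩
    · exact ⟨b, by simp, r2⟩

theorem triangle_of_inC {Q : QuivRel} {st : SigmaTau Q}
    (hR : ∀ ρ ∈ Q.rel, ρ.1 ∈ Q.A ∧ ρ.2 ∈ Q.A ∧ Q.src ρ.1 = Q.tgt ρ.2)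
    (h3 : ∀ a, InC Q st a → (orb (PsiRel Q st) a).ncard = 3) {a : ℕ} (ha : InC Q st a) :
    ∃ b c, IsTriangleTriple Q a b c := by
  obtain ⟨c, hc, ec⟩ := inC_forward hR ha
  obtain ⟨b, hb, eb⟩ := inC_forward hR hc
  obtain ⟨d, hd, ed⟩ := inC_forward hR hb
  have psi : ∀ {x y}, InC Q st x → InC Q st y → hs st x = ht st y → PsiRel Q st x y := by
    intro x y hx hy e
    simp only [hs, ht, Prod.mk.injEq] at e
    exact ⟨hx, hy, e.1.symm, e.2.symm⟩
  have half : ∀ {x y}, PsiRel Q st x y → hs st x = ht st y := by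
    rintro x y ⟨-, -, e1, e2⟩
    simp only [hs, ht, Prod.mk.injEq]
    exact ⟨e1.symm, e2.symm⟩
  have m1 : c ∈ orb (PsiRel Q st) a := Relation.EqvGen.symm _ _ (.rel _ _ (psi hc ha ec))
  have m2 : b ∈ orb (PsiRel Q st) a :=
    .trans _ _ _ m1 (Relation.EqvGen.symm _ _ (.rel _ _ (psi hb hc eb)))
  have m3 : d ∈ orb (PsiRel Q st) a :=
    .trans _ _ _ m2 (Relation.EqvGen.symm _ _ (.rel _ _ (psi hd hb ed)))
  have m0 : a ∈ orb (PsiRel Q st) a := .refl a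
  have hn := h3 a ha
  have hfin : (orb (PsiRel Q st) a).Finite := Set.finite_of_ncard_pos (by omega)
  have hca : c ≠ a := by
    rintro rfl
    have hsub : orb (PsiRel Q st) c ⊆ ({c} : Set ℕ) := by
      apply orb_subset _ _ (by simp)
      intro x y hxy
      have e := half hxy
      simp only [Set.mem_singleton_iff]
      constructor
      · rintro rfl
        exact ht_inj st hxy.2.1.1 ha.1 (e.symm.trans ec)
      · rintro rfl
        exact hs_inj st hxy.1.1 ha.1 (e.trans ec.symm)
    have := Set.ncard_le_ncard hsub
    simp at this
    omega
  have hba : b ≠ a := by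
    rintro rfl
    have hsub : orb (PsiRel Q st) b ⊆ ({b, c} : Set ℕ) := by
      apply orb_subset _ _ (by simp)
      intro x y hxy
      have e := half hxy
      simp only [Set.mem_singleton_iff, Set.mem_insert_iff]
      constructor
      · rintro (rfl | rfl)
        · right; exact ht_inj st hxy.2.1.1 hc.1 (e.symm.trans eb)
        · left; exact ht_inj st hxy.2.1.1 ha.1 (e.symm.trans ec)
      · rintro (rfl | rfl)
        · right; exact hs_inj st hxy.1.1 hc.1 (e.trans ec.symm)
        · left; exact hs_inj st hxy.1.1 hb.1 (e.trans eb.symm)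
    have h1 := Set.ncard_le_ncard hsub
    have h2 := Set.ncard_insert_le b ({c} : Set ℕ)
    rw [Set.ncard_singleton] at h2
    omega
  have hbc : b ≠ c := by
    rintro rfl
    exact hca (ht_inj st hc.1 ha.1 (eb.symm.trans ec))
  have hda : d = a := by
    by_contra hda
    have hdc : d ≠ c := by
      rintro rfl
      exact hba (ht_inj st hb.1 ha.1 (ed.symm.trans ec))
    have hdb : d ≠ b := by
      rintro rfl
      exact hbc (ht_inj st hb.1 hc.1 (ed.symm.trans eb))
    have hsub : (({a, b, c, d} : Finset ℕ) : Set ℕ) ⊆ orb (PsiRel Q st) a := by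
      intro x hx
      simp only [Finset.coe_insert, Finset.coe_singleton, Set.mem_insert_iff,
        Set.mem_singleton_iff] at hx
      rcases hx with rfl | rfl | rfl | rfl <;> assumption
    have h1 := Set.ncard_le_ncard hsub hfin
    rw [Set.ncard_coe_finset] at h1
    have h2 : ({a, b, c, d} : Finset ℕ).card = 4 := by
      rw [Finset.card_insert_of_notMem (by simp; tauto),
        Finset.card_insert_of_notMem (by simp; tauto),
        Finset.card_insert_of_notMem (by simp; tauto), Finset.card_singleton]
    omega
  subst hda
  have s1 : Q.src d = Q.tgt b := congrArg Prod.fst ed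
  have s2 : Q.src b = Q.tgt c := congrArg Prod.fst eb
  have s3 : Q.src c = Q.tgt d := congrArg Prod.fst ec
  exact ⟨b, c, ⟨hd.1, hb.1, hc.1, hba.symm, hbc, hca.symm, s1, s2, s3⟩,
    (rel_iff_half st hR).2 ⟨hd.1, hb.1, ed⟩, (rel_iff_half st hR).2 ⟨hb.1, hc.1, eb⟩,
    (rel_iff_half st hR).2 ⟨hc.1, hd.1, ec⟩⟩

theorem rel_right_unique {Q : QuivRel} (st : SigmaTau Q)
    (hR : ∀ ρ ∈ Q.rel, ρ.1 ∈ Q.A ∧ ρ.2 ∈ Q.A ∧ Q.src ρ.1 = Q.tgt ρ.2) {a b b' : ℕ}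
    (h : (a, b) ∈ Q.rel) (h' : (a, b') ∈ Q.rel) : b = b' := by
  have h := (rel_iff_half st hR).1 h
  have h' := (rel_iff_half st hR).1 h'
  exact ht_inj st h.2.1 h'.2.1 (h.2.2.symm.trans h'.2.2)

theorem rel_left_unique {Q : QuivRel} (st : SigmaTau Q)
    (hR : ∀ ρ ∈ Q.rel, ρ.1 ∈ Q.A ∧ ρ.2 ∈ Q.A ∧ Q.src ρ.1 = Q.tgt ρ.2) {a a' b : ℕ}
    (h : (a, b) ∈ Q.rel) (h' : (a', b) ∈ Q.rel) : a = a' := by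
  have h := (rel_iff_half st hR).1 h
  have h' := (rel_iff_half st hR).1 h'
  exact hs_inj st h.1 h'.1 (h.2.2.trans h'.2.2.symm)

theorem TriangleSet.rot {Q : QuivRel} {O : Finset ℕ} (h : TriangleSet Q O) {a : ℕ} (ha : a ∈ O) :
    ∃ b c, O = {a, b, c} ∧ IsTriangleTriple Q a b c := by
  obtain ⟨x, y, z, rfl, ht⟩ := h
  simp only [Finset.mem_insert, Finset.mem_singleton] at ha
  rcases ha with rfl | rfl | rfl
  · exact ⟨y, z, rfl, ht⟩
  · exact ⟨z, x, by ext; simp; tauto, ht.rotate⟩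
  · exact ⟨x, y, by ext; simp; tauto, ht.rotate.rotate⟩

theorem TriangleSet.eq_of_mem {Q : QuivRel} (st : SigmaTau Q)
    (hR : ∀ ρ ∈ Q.rel, ρ.1 ∈ Q.A ∧ ρ.2 ∈ Q.A ∧ Q.src ρ.1 = Q.tgt ρ.2) {O O' : Finset ℕ}
    (h : TriangleSet Q O) (h' : TriangleSet Q O') {a : ℕ} (ha : a ∈ O) (ha' : a ∈ O') :
    O = O' := by
  obtain ⟨b, c, rfl, t⟩ := h.rot ha
  obtain ⟨b', c', rfl, t'⟩ := h'.rot ha'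
  have e1 := rel_right_unique st hR t.2.1 t'.2.1
  have e2 := rel_left_unique st hR t.2.2.2 t'.2.2.2
  rw [e1, e2]

theorem TriangleSet.card {Q : QuivRel} {O : Finset ℕ} (h : TriangleSet Q O) : O.card = 3 := by
  obtain ⟨a, b, c, rfl, ⟨-, -, -, h1, h2, h3, -⟩, -⟩ := h
  exact Finset.card_eq_three.2 ⟨a, b, c, h1, h3, h2, rfl⟩


/-! ### Connectivity with respect to a set of arrows -/

/-- Adjacency through arrows of `B`. -/
def AdjB (Q : QuivRel) (B : Finset ℕ) (x y : ℕ) : Prop :=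
  ∃ a ∈ B, (Q.src a = x ∧ Q.tgt a = y) ∨ (Q.src a = y ∧ Q.tgt a = x)

/-- Connectedness of two vertices through arrows of `B`. -/
def CB (Q : QuivRel) (B : Finset ℕ) : ℕ → ℕ → Prop := Relation.ReflTransGen (AdjB Q B)

/-- All vertices are connected through arrows of `B`. -/
def ConnB (Q : QuivRel) (B : Finset ℕ) : Prop := ∀ x ∈ Q.V, ∀ y ∈ Q.V, CB Q B x y

theorem CB.symm {Q : QuivRel} {B : Finset ℕ} {x y : ℕ} (h : CB Q B x y) : CB Q B y x := by
  induction h with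
  | refl => exact Relation.ReflTransGen.refl
  | tail _ hs ih =>
    obtain ⟨a, ha, h⟩ := hs
    exact Relation.ReflTransGen.head ⟨a, ha, h.symm⟩ ih

theorem CB.trans {Q : QuivRel} {B : Finset ℕ} {x y z : ℕ} (h : CB Q B x y) (h' : CB Q B y z) :
    CB Q B x z := Relation.ReflTransGen.trans h h'

theorem CB.arrow {Q : QuivRel} {B : Finset ℕ} {a : ℕ} (h : a ∈ B) :
    CB Q B (Q.src a) (Q.tgt a) := Relation.ReflTransGen.single ⟨a, h, Or.inl ⟨rfl, rfl⟩⟩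

theorem CB.replace {Q : QuivRel} {B B' : Finset ℕ}
    (h : ∀ a ∈ B, CB Q B' (Q.src a) (Q.tgt a)) {x y : ℕ} (hxy : CB Q B x y) : CB Q B' x y := by
  induction hxy with
  | refl => exact Relation.ReflTransGen.refl
  | tail _ hs ih =>
    refine ih.trans ?_
    obtain ⟨a, ha, ⟨rfl, rfl⟩ | ⟨rfl, rfl⟩⟩ := hs
    · exact h a ha
    · exact (h a ha).symm

theorem CB.mono {Q : QuivRel} {B B' : Finset ℕ} (h : B ⊆ B') {x y : ℕ} (hxy : CB Q B x y) :
    CB Q B' x y := hxy.replace (fun _ ha => CB.arrow (h ha))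

theorem ConnB.replace {Q : QuivRel} {B B' : Finset ℕ} (hB : ConnB Q B)
    (h : ∀ a ∈ B, a ∉ B' → CB Q B' (Q.src a) (Q.tgt a)) : ConnB Q B' := by
  intro x hx y hy
  refine (hB x hx y hy).replace (fun a ha => ?_)
  by_cases h' : a ∈ B'
  · exact CB.arrow h'
  · exact h a ha h'

/-- The third side of a triangle can be replaced by the other two. -/
theorem CB.triangle {Q : QuivRel} {B : Finset ℕ} {a b c : ℕ} (h : IsTriangleTriple Q a b c)
    (hb : b ∈ B) (hc : c ∈ B) : CB Q B (Q.src a) (Q.tgt a) := by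
  obtain ⟨⟨-, -, -, -, -, -, h1, h2, h3⟩, -⟩ := h
  rw [h1, ← h3]
  refine (CB.arrow hb).symm.trans ?_
  rw [h2]
  exact (CB.arrow hc).symm

/-- A connected graph has at least `|V| - 1` edges. -/
theorem ConnB.card {Q : QuivRel} {B : Finset ℕ}
    (hne : Q.V.Nonempty) (hV : ∀ a ∈ B, Q.src a ∈ Q.V ∧ Q.tgt a ∈ Q.V) (h : ConnB Q B) :
    Q.V.card ≤ B.card + 1 := by
  classical
  let G : SimpleGraph Q.V := SimpleGraph.fromRel (fun x y => AdjB Q B x y)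
  have hreach : ∀ x y, CB Q B x y → ∀ (hx : x ∈ Q.V), ∃ hy : y ∈ Q.V,
      G.Reachable ⟨x, hx⟩ ⟨y, hy⟩ := by
    intro x y hxy hx
    induction hxy with
    | refl => exact ⟨hx, SimpleGraph.Reachable.refl _⟩
    | @tail u v _ hs ih =>
      obtain ⟨hu, ih⟩ := ih
      have hv : v ∈ Q.V := by
        obtain ⟨a, ha, ⟨rfl, rfl⟩ | ⟨rfl, rfl⟩⟩ := hs
        · exact (hV a ha).2
        · exact (hV a ha).1
      refine ⟨hv, ih.trans ?_⟩
      by_cases huv : u = v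
      · subst huv; exact SimpleGraph.Reachable.refl _
      · apply SimpleGraph.Adj.reachable
        rw [SimpleGraph.fromRel_adj]
        exact ⟨by simpa using huv, Or.inl hs⟩
  have hconn : G.Connected := by
    haveI : Nonempty Q.V := ⟨⟨hne.choose, hne.choose_spec⟩⟩
    refine SimpleGraph.Connected.mk ?_
    rintro ⟨x, hx⟩ ⟨y, hy⟩
    exact (hreach x y (h x hx y hy) hx).2
  have h1 := hconn.card_vert_le_card_edgeSet_add_one
  have h2 : Nat.card G.edgeSet ≤ B.card := by
    have hsub : G.edgeSet ⊆ ((B.attach.image (fun a =>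
        (s(⟨Q.src a.1, (hV a.1 a.2).1⟩, ⟨Q.tgt a.1, (hV a.1 a.2).2⟩) : Sym2 Q.V)) :
          Finset (Sym2 Q.V)) : Set (Sym2 Q.V)) := by
      intro e he
      induction e using Sym2.ind with
      | _ x y =>
        rw [SimpleGraph.mem_edgeSet, SimpleGraph.fromRel_adj] at he
        simp only [Finset.coe_image, Set.mem_image, Finset.mem_coe, Finset.mem_attach, true_and,
          Subtype.exists]
        obtain ⟨-, ⟨a, ha, h⟩ | ⟨a, ha, h⟩⟩ := he <;> refine ⟨a, ha, ?_⟩ <;>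
          rw [Sym2.eq_iff] <;> simp only [Subtype.ext_iff] <;> tauto
    have := Set.ncard_le_ncard hsub
    rw [Set.ncard_coe_finset] at this
    calc Nat.card G.edgeSet = G.edgeSet.ncard := rfl
      _ ≤ _ := this
      _ ≤ B.attach.card := Finset.card_image_le
      _ = B.card := Finset.card_attach
  have h3 : Nat.card Q.V = Q.V.card := by simp
  omega

/-- Deleting all three arrows of a triangle disconnects the quiver. -/
theorem not_connB_sdiff_triangle {Q : QuivRel} (st : SigmaTau Q) (hne : Q.V.Nonempty)
    (hV : ∀ a ∈ Q.A, Q.src a ∈ Q.V ∧ Q.tgt a ∈ Q.V)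
    (hR : ∀ ρ ∈ Q.rel, ρ.1 ∈ Q.A ∧ ρ.2 ∈ Q.A ∧ Q.src ρ.1 = Q.tgt ρ.2)
    (TF : Finset (Finset ℕ)) (hTF : ∀ O, O ∈ TF ↔ TriangleSet Q O)
    (hcard : Q.A.card = Q.V.card + TF.card) {O : Finset ℕ} (hO : TriangleSet Q O) :
    ¬ ConnB Q (Q.A \ O) := by
  classical
  intro hconn
  have hex : ∀ O : Finset ℕ, ∃ a, TriangleSet Q O → a ∈ O := by
    intro O
    by_cases h : TriangleSet Q O
    · obtain ⟨a, b, c, rfl, -⟩ := h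
      exact ⟨a, fun _ => by simp⟩
    · exact ⟨0, fun h' => absurd h' h⟩
  choose ch hch using hex
  have hsubA : ∀ O, TriangleSet Q O → O ⊆ Q.A := by
    rintro _ ⟨a, b, c, rfl, ⟨h1, h2, h3, -⟩, -⟩ x hx
    simp only [Finset.mem_insert, Finset.mem_singleton] at hx
    rcases hx with rfl | rfl | rfl <;> assumption
  set D : Finset ℕ := (TF.erase O).image ch with hD
  have hDcard : D.card = TF.card - 1 := by
    rw [hD, Finset.card_image_of_injOn, Finset.card_erase_of_mem ((hTF O).2 hO)]
    intro t ht t' ht' e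
    have ht := (hTF t).1 (Finset.mem_of_mem_erase ht)
    have ht' := (hTF t').1 (Finset.mem_of_mem_erase ht')
    have := hch t' ht'
    rw [← e] at this
    exact ht.eq_of_mem st hR ht' (hch t ht) this
  have hdisj : Disjoint O D := by
    rw [Finset.disjoint_left]
    intro a ha haD
    obtain ⟨t, ht, rfl⟩ := Finset.mem_image.1 haD
    have ht2 := (hTF t).1 (Finset.mem_of_mem_erase ht)
    exact (Finset.mem_erase.1 ht).1 (ht2.eq_of_mem st hR hO (hch t ht2) ha)
  have hsub : O ∪ D ⊆ Q.A := by
    apply Finset.union_subset (hsubA O hO)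
    intro a haD
    obtain ⟨t, ht, rfl⟩ := Finset.mem_image.1 haD
    have ht2 := (hTF t).1 (Finset.mem_of_mem_erase ht)
    exact hsubA t ht2 (hch t ht2)
  have hconn2 : ConnB Q (Q.A \ (O ∪ D)) := by
    refine hconn.replace ?_
    intro a ha ha'
    simp only [Finset.mem_sdiff, Finset.mem_union] at ha ha'
    have haD : a ∈ D := by tauto
    obtain ⟨t, ht, rfl⟩ := Finset.mem_image.1 haD
    have htO := (Finset.mem_erase.1 ht).1
    have ht2 := (hTF t).1 (Finset.mem_of_mem_erase ht)
    obtain ⟨b, c, e, tri⟩ := ht2.rot (hch t ht2)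
    have other : ∀ x ∈ t, x ≠ ch t → x ∈ Q.A \ (O ∪ D) := by
      intro x hx hxne
      simp only [Finset.mem_sdiff, Finset.mem_union, not_or]
      refine ⟨hsubA t ht2 hx, fun hxO => htO (ht2.eq_of_mem st hR hO hx hxO), fun hxD => ?_⟩
      obtain ⟨t', ht', rfl⟩ := Finset.mem_image.1 hxD
      have ht2' := (hTF t').1 (Finset.mem_of_mem_erase ht')
      exact hxne (by rw [ht2.eq_of_mem st hR ht2' hx (hch t' ht2')])
    obtain ⟨-, -, -, n1, n2, n3, -⟩ := tri.1
    exact CB.triangle tri (other b (by rw [e]; simp) n1.symm) (other c (by rw [e]; simp) n3.symm)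
  have k1 := hconn2.card hne (fun a ha => hV a (Finset.mem_sdiff.1 ha).1)
  have k2 := Finset.card_sdiff_add_card_eq_card hsub
  rw [Finset.card_union_of_disjoint hdisj, hO.card, hDcard] at k2
  have k3 : 0 < TF.card := Finset.card_pos.2 ⟨O, (hTF O).2 hO⟩
  omega

/-- No branch arrows after deleting `g`. -/
def NB (Q : QuivRel) (g : ℕ) : Prop := ∀ a, ¬ BranchArrow (deleteArrows Q {g}) a

theorem nb_iff {Q : QuivRel} {g : ℕ} :
    NB Q g ↔ ∀ a ∈ Q.A, a ≠ g → ConnB Q (Q.A \ {g, a}) := by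
  have e : ∀ a, Connected (deleteArrows (deleteArrows Q {g}) {a}) ↔ ConnB Q (Q.A \ {g, a}) := by
    intro a
    have : Q.A \ {g, a} = (Q.A \ {g}) \ {a} := by
      ext x; simp only [Finset.mem_sdiff, Finset.mem_insert, Finset.mem_singleton]; tauto
    rw [this]
    exact Iff.rfl
  unfold NB BranchArrow
  constructor
  · intro h a ha hne
    by_contra hc
    apply h a
    refine ⟨?_, fun h' => hc ((e a).1 h')⟩
    simp only [deleteArrows, Finset.mem_sdiff, Finset.mem_singleton]
    exact ⟨ha, hne⟩
  · rintro h a ⟨h1, h2⟩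
    simp only [deleteArrows, Finset.mem_sdiff, Finset.mem_singleton] at h1
    exact h2 ((e a).2 (h a h1.1 h1.2))

theorem nb_triangle {Q : QuivRel} (hba : ∀ a : ℕ, ¬ BranchArrow Q a) {g h k : ℕ}
    (tri : IsTriangleTriple Q g h k) (hdis : ¬ ConnB Q (Q.A \ {g, h, k}))
    (hg : CB Q (Q.A \ {g, h, k}) (Q.src g) (Q.tgt g))
    (hor : ConnB Q (Q.A \ {g, h}) ∨ ConnB Q (Q.A \ {g, k})) :
    NB Q g ∧ ¬ NB Q h ∧ ¬ NB Q k := by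
  have tri1 := tri
  obtain ⟨⟨m1, m2, m3, n1, n2, n3, s1, s2, s3⟩, -⟩ := tri
  have hg1 : CB Q (Q.A \ {g, h}) (Q.src g) (Q.tgt g) := by
    refine hg.mono ?_
    intro x
    simp only [Finset.mem_sdiff, Finset.mem_insert, Finset.mem_singleton]
    tauto
  have hg2 : CB Q (Q.A \ {g, k}) (Q.src g) (Q.tgt g) := by
    refine hg.mono ?_
    intro x
    simp only [Finset.mem_sdiff, Finset.mem_insert, Finset.mem_singleton]
    tauto
  have kin : k ∈ Q.A \ {g, h} := by
    simp only [Finset.mem_sdiff, Finset.mem_insert, Finset.mem_singleton]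
    exact ⟨m3, by simp [n2.symm, n3.symm]⟩
  have hin : h ∈ Q.A \ {g, k} := by
    simp only [Finset.mem_sdiff, Finset.mem_insert, Finset.mem_singleton]
    exact ⟨m2, by simp [n1.symm, n2]⟩
  have both : ConnB Q (Q.A \ {g, h}) ∧ ConnB Q (Q.A \ {g, k}) := by
    rcases hor with hc | hc
    · refine ⟨hc, hc.replace ?_⟩
      intro a ha ha'
      simp only [Finset.mem_sdiff, Finset.mem_insert, Finset.mem_singleton] at ha ha'
      have : a = k := by tauto
      subst this
      rw [s3, ← s2]
      refine hg2.symm.trans ?_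
      rw [s1]
      exact (CB.arrow hin).symm
    · refine ⟨hc.replace ?_, hc⟩
      intro a ha ha'
      simp only [Finset.mem_sdiff, Finset.mem_insert, Finset.mem_singleton] at ha ha'
      have : a = h := by tauto
      subst this
      rw [s2, ← s1]
      refine (CB.arrow kin).symm.trans ?_
      rw [s3]
      exact hg1.symm
  have no : ¬ ConnB Q (Q.A \ {h, k}) := by
    intro hc
    apply hdis
    refine hc.replace ?_
    intro a ha ha'
    simp only [Finset.mem_sdiff, Finset.mem_insert, Finset.mem_singleton] at ha ha'
    have : a = g := by tauto
    subst this
    exact hg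
  refine ⟨?_, ?_, ?_⟩
  · rw [nb_iff]
    intro e he hne
    by_cases e1 : e = h
    · subst e1; exact both.1
    by_cases e2 : e = k
    · subst e2; exact both.2
    have hce : ConnB Q (Q.A \ {e}) := by
      by_contra hc
      exact hba e ⟨he, fun h' => hc h'⟩
    refine hce.replace ?_
    intro a ha ha'
    simp only [Finset.mem_sdiff, Finset.mem_insert, Finset.mem_singleton] at ha ha'
    have : a = g := by tauto
    subst this
    refine CB.triangle tri1 ?_ ?_
    · simp only [Finset.mem_sdiff, Finset.mem_insert, Finset.mem_singleton, not_or]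
      exact ⟨m2, n1.symm, fun h' => e1 h'.symm⟩
    · simp only [Finset.mem_sdiff, Finset.mem_insert, Finset.mem_singleton, not_or]
      exact ⟨m3, n3.symm, fun h' => e2 h'.symm⟩
  · rw [nb_iff]
    intro hc
    exact no (hc k m3 n2.symm)
  · rw [nb_iff]
    intro hc
    apply no
    rw [Finset.pair_comm]
    exact hc h m2 n2

/-- Existence and uniqueness of the distinguished arrow of a triangle. -/
theorem exists_distinguished {Q : QuivRel} 
    (hV : ∀ a ∈ Q.A, Q.src a ∈ Q.V ∧ Q.tgt a ∈ Q.V)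
    (hba : ∀ a : ℕ, ¬ BranchArrow Q a) {O : Finset ℕ}
    (hO : TriangleSet Q O) (hbt : ¬ BranchTriangle Q O) (hdis : ¬ ConnB Q (Q.A \ O)) :
    ∃ g ∈ O, ∀ g' ∈ O, NB Q g' ↔ g' = g := by
  classical
  have hex : ∃ S ⊆ O, S.card = 2 ∧ ConnB Q (Q.A \ S) := by
    by_contra hc
    apply hbt
    refine ⟨hO, fun S hS h2 hcon => hc ⟨S, hS, h2, hcon⟩⟩
  obtain ⟨S, hSO, hS2, hcon⟩ := hex
  have h1 := Finset.card_sdiff_add_card_eq_card hSO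
  rw [hS2, hO.card] at h1
  obtain ⟨a, ha⟩ := Finset.card_eq_one.1 (show (O \ S).card = 1 by omega)
  have haO : a ∈ O ∧ a ∉ S := by
    have : a ∈ O \ S := by rw [ha]; simp
    exact Finset.mem_sdiff.1 this
  obtain ⟨b, c, rfl, tri⟩ := hO.rot haO.1
  have tri1 := tri
  obtain ⟨⟨m1, m2, m3, n1, n2, n3, s1, s2, s3⟩, -⟩ := tri
  have hSeq : S = {b, c} := by
    apply Finset.eq_of_subset_of_card_le
    · intro x hx
      have h3 := hSO hx
      simp only [Finset.mem_insert, Finset.mem_singleton] at h3 ⊢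
      rcases h3 with rfl | h3
      · exact absurd hx haO.2
      · exact h3
    · rw [hS2]
      exact Finset.card_le_two
  subst hSeq
  have hva : Q.src a ∈ Q.V := (hV a m1).1
  have hside : ∀ v, CB Q (Q.A \ {b, c}) (Q.src a) v →
      CB Q (Q.A \ {a, b, c}) (Q.src a) v ∨ CB Q (Q.A \ {a, b, c}) (Q.tgt a) v := by
    intro v hv
    induction hv with
    | refl => exact Or.inl Relation.ReflTransGen.refl
    | @tail u v _ hs ih =>
      obtain ⟨e, he, hev⟩ := hs
      by_cases hea : e = a
      · subst hea
        rcases hev with ⟨-, rfl⟩ | ⟨rfl, -⟩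
        · exact Or.inr Relation.ReflTransGen.refl
        · exact Or.inl Relation.ReflTransGen.refl
      · have hst : CB Q (Q.A \ {a, b, c}) u v := by
          refine Relation.ReflTransGen.single ⟨e, ?_, hev⟩
          simp only [Finset.mem_sdiff, Finset.mem_insert, Finset.mem_singleton] at he ⊢
          tauto
        rcases ih with ih | ih
        · exact Or.inl (ih.trans hst)
        · exact Or.inr (ih.trans hst)
  have r1 : ({a, b, c} : Finset ℕ) = {b, c, a} := by ext; simp; tauto
  have r2 : ({a, b, c} : Finset ℕ) = {c, a, b} := by ext; simp; tauto
  rcases hside (Q.src b) (hcon _ hva _ (hV b m2).1) with hh | hh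
  · rw [r1] at hh hdis
    rw [s1] at hh
    obtain ⟨k1, k2, k3⟩ := nb_triangle hba tri1.rotate hdis hh.symm (Or.inl hcon)
    refine ⟨b, by simp, ?_⟩
    intro g' hg'
    simp only [Finset.mem_insert, Finset.mem_singleton] at hg'
    rcases hg' with rfl | rfl | rfl <;> simp [k1, k2, k3, n1, n2.symm]
  · rw [r2] at hh hdis
    rw [← s3, s2] at hh
    obtain ⟨k1, k2, k3⟩ := nb_triangle hba tri1.rotate.rotate hdis hh
      (Or.inr (by rw [Finset.pair_comm]; exact hcon))
    refine ⟨c, by simp, ?_⟩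
    intro g' hg'
    simp only [Finset.mem_insert, Finset.mem_singleton] at hg'
    rcases hg' with rfl | rfl | rfl <;> simp [k1, k2, k3, n3, n2]


theorem isGentle_delete {Q : QuivRel} (h : IsGentle Q) (S : Finset ℕ)
    (hc : Connected (deleteArrows Q S)) : IsGentle (deleteArrows Q S) := by
  obtain ⟨g1, g2, -, g4, g5, g6, g7, g8, g9, g10, n, hn⟩ := h
  have sub : ∀ {a}, a ∈ (deleteArrows Q S).A → a ∈ Q.A ∧ a ∉ S := by
    intro a ha
    simpa [deleteArrows] using ha
  have subr : ∀ {a b}, (a, b) ∈ (deleteArrows Q S).rel ↔ (a, b) ∈ Q.rel ∧ a ∉ S ∧ b ∉ S := by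
    intro a b
    simp [deleteArrows]
  refine ⟨g1, fun a ha => g2 a (sub ha).1, hc, ?_, ?_, ?_, ?_, ?_, ?_, ?_, n, ?_⟩
  · rintro ⟨a, b⟩ hρ
    obtain ⟨h1, h2, h3⟩ := subr.1 hρ
    obtain ⟨k1, k2, k3⟩ := g4 _ h1
    refine ⟨?_, ?_, k3⟩
    · simp only [deleteArrows, Finset.mem_sdiff]; exact ⟨k1, h2⟩
    · simp only [deleteArrows, Finset.mem_sdiff]; exact ⟨k2, h3⟩
  · intro x
    refine le_trans (Finset.card_le_card ?_) (g5 x)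
    intro a ha
    rw [Finset.mem_filter] at ha ⊢
    exact ⟨(sub ha.1).1, ha.2⟩
  · intro x
    refine le_trans (Finset.card_le_card ?_) (g6 x)
    intro a ha
    rw [Finset.mem_filter] at ha ⊢
    exact ⟨(sub ha.1).1, ha.2⟩
  · intro a ha
    refine le_trans (Finset.card_le_card ?_) (g7 a (sub ha).1)
    intro b hb
    rw [Finset.mem_filter] at hb ⊢
    refine ⟨(sub hb.1).1, hb.2.1, fun h => hb.2.2 (subr.2 ⟨h, (sub hb.1).2, (sub ha).2⟩)⟩
  · intro a ha
    refine le_trans (Finset.card_le_card ?_) (g8 a (sub ha).1)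
    intro b hb
    rw [Finset.mem_filter] at hb ⊢
    refine ⟨(sub hb.1).1, hb.2.1, fun h => hb.2.2 (subr.2 ⟨h, (sub ha).2, (sub hb.1).2⟩)⟩
  · intro a ha
    refine le_trans (Finset.card_le_card ?_) (g9 a (sub ha).1)
    intro b hb
    rw [Finset.mem_filter] at hb ⊢
    exact ⟨(sub hb.1).1, (subr.1 hb.2).1⟩
  · intro a ha
    refine le_trans (Finset.card_le_card ?_) (g10 a (sub ha).1)
    intro b hb
    rw [Finset.mem_filter] at hb ⊢
    exact ⟨(sub hb.1).1, (subr.1 hb.2).1⟩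
  · rintro l ⟨l1, l2, l3⟩ hl
    obtain ⟨a, b, hab, hin⟩ := hn l ⟨l1, fun a ha => (sub (l2 a ha)).1, l3⟩ hl
    refine ⟨a, b, subr.2 ⟨hab, ?_, ?_⟩, hin⟩
    · exact (sub (l2 a (hin.subset (by simp)))).2
    · exact (sub (l2 b (hin.subset (by simp)))).2


/-- Let `𝚫 ∈ Ã` have no branch arrows, no branch triangles
and no free relations, and let `Γ = 𝚫 ∖ {γ_𝒪 ∣ 𝒪 a triangle}` be its standard
model (here `S` is the set of the distinguished arrows `γ_𝒪`).  Then `Γ` is a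
`1`-cycle gentle quiver, every relation of `Γ` is isolated in `Γ`, and `𝚫` is
isomorphic to the quiver obtained from `Γ` by completing all of its
relations. -/
theorem stmt17 (Q : QuivRel) (st : SigmaTau Q) (hA : ClassAtilde Q st)
    (hba : ∀ a : ℕ, ¬ BranchArrow Q a)
    (hbt : ∀ O : Finset ℕ, ¬ BranchTriangle Q O)
    (hfr : ∀ ρ : ℕ × ℕ, ¬ FreeRel Q st ρ)
    (S : Finset ℕ)
    (hS : ∀ g : ℕ, g ∈ S ↔ ∃ O : Finset ℕ, TriangleSet Q O ∧ g ∈ O ∧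
        ∀ a : ℕ, ¬ BranchArrow (deleteArrows Q {g}) a) :
    IsGentle (deleteArrows Q S) ∧
    (deleteArrows Q S).V.card = (deleteArrows Q S).A.card ∧
    (∀ stΓ : SigmaTau (deleteArrows Q S),
      ∀ ρ ∈ (deleteArrows Q S).rel, Isolated (deleteArrows Q S) stΓ ρ) ∧
    ∃ (γ : ℕ × ℕ → ℕ) (Qc : QuivRel),
      IsCompletion (deleteArrows Q S) (deleteArrows Q S).rel γ Qc ∧
      IsoQR Qc Q := by
  classical
  obtain ⟨hgen, p1, p2, p, q, hp, hq, hf⟩ := hA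
  have hgen' := hgen
  obtain ⟨hne, hV, hconn, hR, -⟩ := hgen'
  set CF : Finset ℕ := Q.A.filter (fun a => InC Q st a) with hCFdef
  have hCF : ∀ a, a ∈ CF ↔ InC Q st a := by
    intro a
    simp only [hCFdef, Finset.mem_filter]
    exact ⟨fun h => h.2, fun h => ⟨h.1, h⟩⟩
  obtain ⟨h3, hCcard, hAcard⟩ := atilde_counts hV hR hp hq hf CF hCF
  have hsubA : ∀ O, TriangleSet Q O → O ⊆ Q.A := by
    rintro _ ⟨a, b, c, rfl, ⟨h1, h2, h3, -⟩, -⟩ x hx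
    simp only [Finset.mem_insert, Finset.mem_singleton] at hx
    rcases hx with rfl | rfl | rfl <;> assumption
  set TF : Finset (Finset ℕ) := Q.A.powerset.filter (fun O => TriangleSet Q O) with hTFdef
  have hTF : ∀ O, O ∈ TF ↔ TriangleSet Q O := by
    intro O
    simp only [hTFdef, Finset.mem_filter, Finset.mem_powerset]
    exact ⟨fun h => h.2, fun h => ⟨hsubA O h, h⟩⟩
  have hCT : CF = TF.biUnion id := by
    ext a
    simp only [Finset.mem_biUnion, hCF, hTF, id]
    constructor
    · intro ha
      obtain ⟨b, c, t⟩ := triangle_of_inC hR h3 ha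
      exact ⟨{a, b, c}, ⟨a, b, c, rfl, t⟩, by simp⟩
    · rintro ⟨O, hO, haO⟩
      obtain ⟨b, c, -, t⟩ := hO.rot haO
      exact triangle_inC hR t
  have hTcard : TF.card = p1 + p2 := by
    have hd : (TF : Set (Finset ℕ)).PairwiseDisjoint id := by
      intro O hO O' hO' hne
      rw [Function.onFun, Finset.disjoint_left]
      intro a ha ha'
      exact hne (((hTF O).1 hO).eq_of_mem st hR ((hTF O').1 hO') ha ha')
    have : CF.card = ∑ O ∈ TF, 3 := by
      rw [hCT, Finset.card_biUnion hd]
      exact Finset.sum_congr rfl (fun O hO => ((hTF O).1 hO).card)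
    simp only [Finset.sum_const, smul_eq_mul] at this
    omega
  have hdist : ∀ O, TriangleSet Q O → ∃ g ∈ O, ∀ g' ∈ O, g' ∈ S ↔ g' = g := by
    intro O hO
    obtain ⟨g, hg, hg'⟩ := exists_distinguished hV hba hO (hbt O)
      (not_connB_sdiff_triangle st hne hV hR TF hTF (by omega) hO)
    refine ⟨g, hg, fun g' hgO => ?_⟩
    rw [← hg' g' hgO, hS]
    constructor
    · rintro ⟨_, _, _, h⟩; exact h
    · intro h; exact ⟨O, hO, hgO, h⟩
  have hStri : ∀ g ∈ S, ∃ b c, IsTriangleTriple Q g b c ∧ b ∉ S ∧ c ∉ S := by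
    intro g hg
    obtain ⟨O, hO, hgO, -⟩ := (hS g).1 hg
    obtain ⟨g0, hg0, hu⟩ := hdist O hO
    have e : g = g0 := (hu g hgO).1 hg
    subst e
    obtain ⟨b, c, rfl, t⟩ := hO.rot hgO
    refine ⟨b, c, t, ?_, ?_⟩
    · rw [hu b (by simp)]; exact t.1.2.2.2.1.symm
    · rw [hu c (by simp)]; exact t.1.2.2.2.2.2.1.symm
  have hSA : S ⊆ Q.A := by
    intro g hg
    obtain ⟨b, c, t, -⟩ := hStri g hg
    exact t.1.1
  have hScard : S.card = TF.card := by
    symm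
    have hex : ∀ O, ∃ g, TriangleSet Q O → g ∈ O ∧ ∀ g' ∈ O, g' ∈ S ↔ g' = g := by
      intro O
      by_cases h : TriangleSet Q O
      · obtain ⟨g, h1, h2⟩ := hdist O h
        exact ⟨g, fun _ => ⟨h1, h2⟩⟩
      · exact ⟨0, fun h' => absurd h' h⟩
    choose d hd using hex
    refine Finset.card_bij (fun O _ => d O) ?_ ?_ ?_
    · intro O hO
      obtain ⟨h1, h2⟩ := hd O ((hTF O).1 hO)
      exact (h2 _ h1).2 rfl
    · intro O hO O' hO' e
      have h1 := (hd O ((hTF O).1 hO)).1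
      have h2 := (hd O' ((hTF O').1 hO')).1
      exact ((hTF O).1 hO).eq_of_mem st hR ((hTF O').1 hO') h1 (by rw [e]; exact h2)
    · intro g hg
      obtain ⟨O, hO, hgO, -⟩ := (hS g).1 hg
      refine ⟨O, (hTF O).2 hO, ?_⟩
      exact (((hd O hO).2 g hgO).1 hg).symm
  have hreltri : ∀ a b, (a, b) ∈ Q.rel → ∃ c, IsTriangleTriple Q a b c := by
    intro a b hab
    by_cases ha : InC Q st a
    · obtain ⟨b', c, t⟩ := triangle_of_inC hR h3 ha
      have := rel_right_unique st hR hab t.2.1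
      subst this
      exact ⟨c, t⟩
    · by_cases hb : InC Q st b
      · obtain ⟨c, a', t⟩ := triangle_of_inC hR h3 hb
        have := rel_left_unique st hR hab t.2.2.2
        subst this
        exact ⟨c, t.rotate.rotate⟩
      · exact absurd ⟨hab, ha, hb⟩ (hfr (a, b))
  -- in each triangle, exactly one arrow lies in `S`
  have hone : ∀ a b c, IsTriangleTriple Q a b c →
      (a ∈ S ∧ b ∉ S ∧ c ∉ S) ∨ (a ∉ S ∧ b ∈ S ∧ c ∉ S) ∨ (a ∉ S ∧ b ∉ S ∧ c ∈ S) := by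
    intro a b c t
    obtain ⟨g, hg, hu⟩ := hdist {a, b, c} ⟨a, b, c, rfl, t⟩
    obtain ⟨-, -, -, n1, n2, n3, -⟩ := t.1
    rw [hu a (by simp), hu b (by simp), hu c (by simp)]
    simp only [Finset.mem_insert, Finset.mem_singleton] at hg
    rcases hg with rfl | rfl | rfl
    · exact Or.inl ⟨rfl, n1.symm, n3.symm⟩
    · exact Or.inr (Or.inl ⟨n1, rfl, n2.symm⟩)
    · exact Or.inr (Or.inr ⟨n3, n2, rfl⟩)
  have hΓconn : Connected (deleteArrows Q S) := by
    have h1 : ConnB Q Q.A := hconn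
    have h2 : ConnB Q (Q.A \ S) := by
      refine h1.replace ?_
      intro a ha ha'
      have haS : a ∈ S := by
        by_contra h
        exact ha' (Finset.mem_sdiff.2 ⟨ha, h⟩)
      obtain ⟨b, c, t, hb, hc⟩ := hStri a haS
      exact CB.triangle t (Finset.mem_sdiff.2 ⟨t.1.2.1, hb⟩) (Finset.mem_sdiff.2 ⟨t.1.2.2.1, hc⟩)
    exact h2
  have hΓgen := isGentle_delete hgen S hΓconn
  have memA : ∀ {a}, a ∈ (deleteArrows Q S).A ↔ a ∈ Q.A ∧ a ∉ S := by
    intro a; simp [deleteArrows]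
  have memR : ∀ {a b}, (a, b) ∈ (deleteArrows Q S).rel ↔ (a, b) ∈ Q.rel ∧ a ∉ S ∧ b ∉ S := by
    intro a b; simp [deleteArrows]
  have hΓtri : ∀ a b, (a, b) ∈ (deleteArrows Q S).rel →
      ∃ c, IsTriangleTriple Q a b c ∧ c ∈ S := by
    intro a b hab
    obtain ⟨h1, h2, h3⟩ := memR.1 hab
    obtain ⟨c, t⟩ := hreltri a b h1
    refine ⟨c, t, ?_⟩
    have := hone a b c t
    tauto
  refine ⟨hΓgen, ?_, ?_, ?_⟩
  · have := Finset.card_sdiff_add_card_eq_card hSA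
    change Q.V.card = (Q.A \ S).card
    omega
  · rintro stΓ ⟨a, b⟩ hab
    obtain ⟨-, -, -, hRΓ, -⟩ := hΓgen
    obtain ⟨c, t, hc⟩ := hΓtri a b hab
    have hab' := (rel_iff_half stΓ hRΓ).1 hab
    refine ⟨hab, ?_⟩
    rw [inN_arrows_iff stΓ hRΓ]
    refine ⟨by simp, ?_, ?_, ?_, ?_⟩
    · intro x hx
      simp only [List.mem_cons, List.not_mem_nil, or_false] at hx
      rcases hx with rfl | rfl
      · exact hab'.1
      · exact hab'.2.1
    · intro i hi
      have : i = 0 := by simpa using hi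
      subst this
      exact hab'.2.2
    · intro x hx e
      have hr := memR.1 ((rel_iff_half stΓ hRΓ).2 ⟨hx, hab'.1, e⟩)
      have := rel_left_unique st hR hr.1 t.2.2.2
      subst this
      exact hr.2.1 hc
    · intro x hx e
      have hr := memR.1 ((rel_iff_half stΓ hRΓ).2 ⟨hab'.2.1, hx, e.symm⟩)
      have := rel_right_unique st hR hr.1 t.2.2.1
      subst this
      exact hr.2.2 hc
  · have hex : ∀ ρ : ℕ × ℕ, ∃ c, ρ ∈ (deleteArrows Q S).rel →
        IsTriangleTriple Q ρ.1 ρ.2 c ∧ c ∈ S := by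
      intro ρ
      by_cases h : ρ ∈ (deleteArrows Q S).rel
      · obtain ⟨c, hc⟩ := hΓtri ρ.1 ρ.2 h
        exact ⟨c, fun _ => hc⟩
      · exact ⟨0, fun h' => absurd h' h⟩
    choose γ hγ using hex
    have γeq : ∀ {a b c}, IsTriangleTriple Q a b c → a ∉ S → b ∉ S →
        (a, b) ∈ (deleteArrows Q S).rel ∧ γ (a, b) = c := by
      intro a b c t ha hb
      have hm : (a, b) ∈ (deleteArrows Q S).rel := memR.2 ⟨t.2.1, ha, hb⟩
      exact ⟨hm, rel_left_unique st hR (hγ _ hm).1.2.2.2 t.2.2.2⟩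
    refine ⟨γ, Q, ?_, ?_⟩
    · refine
        { subset := Finset.Subset.refl _
          fresh := fun ρ hρ h => (memA.1 h).2 (hγ ρ hρ).2
          inj := ?_
          V_eq := rfl
          A_eq := ?_
          src_old := fun _ _ => rfl
          tgt_old := fun _ _ => rfl
          src_new := fun ρ hρ => (hγ ρ hρ).1.1.2.2.2.2.2.2.2.2
          tgt_new := fun ρ hρ => (hγ ρ hρ).1.1.2.2.2.2.2.2.2.1.symm
          rel_eq := ?_ }
      · intro ρ hρ ρ' hρ' e
        have t := (hγ ρ hρ).1
        have t' := (hγ ρ' hρ').1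
        rw [← e] at t'
        exact Prod.ext (rel_right_unique st hR t.2.2.2 t'.2.2.2)
          (rel_left_unique st hR t.2.2.1 t'.2.2.1)
      · ext a
        rw [Finset.mem_union, memA, Finset.mem_image]
        constructor
        · intro ha
          by_cases haS : a ∈ S
          · right
            obtain ⟨b, c, t, hb, hc⟩ := hStri a haS
            obtain ⟨k1, k2⟩ := γeq t.rotate hb hc
            exact ⟨(b, c), k1, k2⟩
          · exact Or.inl ⟨ha, haS⟩
        · rintro (h | ⟨ρ, hρ, rfl⟩)
          · exact h.1
          · exact hSA (hγ ρ hρ).2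
      · ext ⟨a, b⟩
        rw [Finset.mem_union, Finset.mem_union, memR, Finset.mem_image, Finset.mem_image]
        constructor
        · intro hab
          obtain ⟨c, t⟩ := hreltri a b hab
          rcases hone a b c t with ⟨x, y, z⟩ | ⟨x, y, z⟩ | ⟨x, y, z⟩
          · left; right
            obtain ⟨k1, k2⟩ := γeq t.rotate y z
            exact ⟨(b, c), k1, by rw [k2]⟩
          · right
            obtain ⟨k1, k2⟩ := γeq t.rotate.rotate z x
            exact ⟨(c, a), k1, by rw [k2]⟩
          · exact Or.inl (Or.inl ⟨hab, x, y⟩)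
        · rintro ((h | ⟨ρ, hρ, e⟩) | ⟨ρ, hρ, e⟩)
          · exact h.1
          · rw [← e]; exact (hγ ρ hρ).1.2.2.2
          · rw [← e]; exact (hγ ρ hρ).1.2.2.1
    · refine ⟨id, id, Set.bijOn_id _, Set.bijOn_id _, fun a _ => ⟨rfl, rfl⟩, fun a _ b _ => Iff.rfl⟩

end GentleQuiv
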